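/- Let g_1,…,g_m ∈ ℝ[x_1,…,x_n], V = {x ∈ ℝ^n : g_j(x) = 0 for j = 1,…,m}, and suppose f ∈ ℝ[x_1,…,x_n] has a global minimizer x* ∈ V on V with f(x*) = f* and ‖x*‖_∞ ≤ ρ. Let η > 0 and choose ε > 0 with ε ≤ η·(n·e^{ρ²})^{-1}. Then for all sufficiently large r (with 2r ≥ max(deg f, deg g_j^2)), the infimum inf𝒬_{εr} of L_y(f + ε·θ_r) over all y : {α ∈ ℕ^n : |α| ≤ 2r} → ℝ with y_0 = 1, M_r(y) positive semidefinite, and L_y(g_j^2) ≤ 0 for all j, satisfies f* ≤ inf𝒬_{εr} ≤ f* + η. -/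

import Mathlib

open MvPolynomial MeasureTheory Filter Topology

/-- `θ_r(x) = ∑_{k=0}^r ∑_{i=1}^n x_i^{2k}/k!` as a polynomial in `ℝ[x_1,…,x_n]`. -/
noncomputable def theta (n r : ℕ) : MvPolynomial (Fin n) ℝ :=
  ∑ k ∈ Finset.range (r + 1), ∑ i : Fin n,
    C ((1 : ℝ) / (Nat.factorial k : ℝ)) * X i ^ (2 * k)

/-- A polynomial is a sum of squares if it is a finite sum of squares of polynomials. -/
def IsSOS {n : ℕ} (p : MvPolynomial (Fin n) ℝ) : Prop :=
  ∃ (k : ℕ) (q : Fin k → MvPolynomial (Fin n) ℝ), p = ∑ i, q i ^ 2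

/-- The linear functional `L_y` sending `p = ∑_α p_α x^α` to `∑_α p_α y_α`. -/
noncomputable def Ly {n : ℕ} (y : (Fin n →₀ ℕ) → ℝ) (p : MvPolynomial (Fin n) ℝ) : ℝ :=
  ∑ α ∈ p.support, coeff α p * y α

/-- The finite set of multi-indices `α ∈ ℕ^n` with `|α| ≤ r`. -/
noncomputable def degLE (n r : ℕ) : Finset (Fin n →₀ ℕ) :=
  (Finset.Iic (Finsupp.equivFunOnFinite.symm fun _ : Fin n => r)).filter
    fun α => (α.sum fun _ e => e) ≤ r

/-- The moment matrix `M_r(y)`, indexed by multi-indices `|α| ≤ r`, `|β| ≤ r`, with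
entries `y_{α+β}`. -/
noncomputable def momentMatrix (n r : ℕ) (y : (Fin n →₀ ℕ) → ℝ) :
    Matrix ↥(degLE n r) ↥(degLE n r) ℝ :=
  fun α β => y (α.1 + β.1)

/-- The optimal value `inf 𝒬_{εr}` of the SDP relaxation. -/
noncomputable def infQ (n m : ℕ) (g : Fin m → MvPolynomial (Fin n) ℝ)
    (f : MvPolynomial (Fin n) ℝ) (ε : ℝ) (r : ℕ) : ℝ :=
  sInf {v | ∃ y : (Fin n →₀ ℕ) → ℝ, y 0 = 1 ∧ (momentMatrix n r y).PosSemidef ∧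
    (∀ j, Ly y ((g j) ^ 2) ≤ 0) ∧ v = Ly y (f + C ε * theta n r)}


set_option linter.unusedSectionVars false

section Pos
variable {A : Type*} [CommRing A] [Algebra ℝ A]

lemma isSumSq_algebraMap {r : ℝ} (hr : 0 ≤ r) : IsSumSq (algebraMap ℝ A r) := by
  rw [← Real.mul_self_sqrt hr, map_mul]
  exact IsSumSq.mul_self _

lemma isSumSq_pow_two_mul (a : A) (m : ℕ) : IsSumSq (a ^ (2 * m)) := by
  have : a ^ (2 * m) = a ^ m * a ^ m := by ring
  rw [this]; exact IsSumSq.mul_self _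

lemma isSumSq_cross (a b : A) (m : ℕ) :
    IsSumSq ((a ^ (2 * m) - b ^ (2 * m)) * (a ^ 2 - b ^ 2)) := by
  induction m with
  | zero => simp
  | succ m ih =>
    have : (a ^ (2 * (m + 1)) - b ^ (2 * (m + 1))) * (a ^ 2 - b ^ 2)
      = (a * a) * ((a ^ (2 * m) - b ^ (2 * m)) * (a ^ 2 - b ^ 2))
        + b ^ (2 * m) * ((a ^ 2 - b ^ 2) * (a ^ 2 - b ^ 2)) := by ring
    rw [this]
    exact ((IsSumSq.mul_self a).mul ih).add
      ((isSumSq_pow_two_mul b m).mul (IsSumSq.mul_self _))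

lemma isSumSq_add_pow (a b : A) (m : ℕ) :
    IsSumSq (4 ^ m * (a ^ (2 * m) + b ^ (2 * m)) - (a + b) ^ (2 * m)) := by
  induction m with
  | zero =>
    have : (4 : A) ^ 0 * (a ^ (2 * 0) + b ^ (2 * 0)) - (a + b) ^ (2 * 0) = 1 * 1 := by
      simp
    rw [this]; exact IsSumSq.mul_self _
  | succ m ih =>
    have h4 : IsSumSq ((4 : A) ^ m) := by
      have := isSumSq_pow_two_mul (2 : A) m
      have e : (2 : A) ^ (2 * m) = 4 ^ m := by rw [pow_mul]; norm_num
      rwa [e] at this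
    have h2 : IsSumSq (2 : A) := by
      have := isSumSq_algebraMap (A := A) (r := 2) (by norm_num)
      rwa [map_ofNat] at this
    have : (4 : A) ^ (m + 1) * (a ^ (2 * (m + 1)) + b ^ (2 * (m + 1)))
        - (a + b) ^ (2 * (m + 1))
      = ((a + b) * (a + b)) *
          (4 ^ m * (a ^ (2 * m) + b ^ (2 * m)) - (a + b) ^ (2 * m))
        + (4 ^ m * (a ^ (2 * m) + b ^ (2 * m)) * ((a - b) * (a - b))
        + 2 * (4 ^ m * ((a ^ (2 * m) - b ^ (2 * m)) * (a ^ 2 - b ^ 2)))) := by ring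
    rw [this]
    refine ((IsSumSq.mul_self _).mul ih).add (IsSumSq.add ?_ ?_)
    · exact (h4.mul ((isSumSq_pow_two_mul a m).add (isSumSq_pow_two_mul b m))).mul
        (IsSumSq.mul_self _)
    · exact h2.mul (h4.mul (isSumSq_cross a b m))

variable (L : A →ₗ[ℝ] ℝ)

/-- positivity of a functional on squares -/
def PosFun : Prop := ∀ a, 0 ≤ L (a * a)

variable {L}

lemma PosFun.sumSq (hL : PosFun L) {a : A} (ha : IsSumSq a) : 0 ≤ L a := by
  induction ha with
  | zero => simp
  | sq_add a _ ih => rw [map_add]; exact add_nonneg (hL _) ih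

lemma PosFun.cs (hL : PosFun L) (a b : A) : L (a * b) ^ 2 ≤ L (a * a) * L (b * b) := by
  have key : ∀ t : ℝ, 0 ≤ L (b * b) * (t * t) + 2 * L (a * b) * t + L (a * a) := by
    intro t
    have := hL (a + t • b)
    have e : (a + t • b) * (a + t • b) = a * a + (2 * t) • (a * b) + (t * t) • (b * b) := by
      simp only [Algebra.smul_def, map_mul, map_ofNat]; ring
    rw [e] at this
    simp only [map_add, map_smul, smul_eq_mul] at this
    linarith
  have := discrim_le_zero key
  unfold discrim at this
  nlinarith

/-- families with uniformly bounded even moments -/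
def goodSub {ι : Type*} (hL : PosFun L) : Subalgebra ℝ (ι → A) where
  carrier := {p | ∀ m : ℕ, ∃ C : ℝ, ∀ k, L (p k ^ (2 * m)) ≤ C}
  algebraMap_mem' r m := ⟨L (algebraMap ℝ A r ^ (2 * m)), fun k => le_of_eq (by simp)⟩
  add_mem' := by
    intro a b ha hb m
    obtain ⟨C, hC⟩ := ha m
    obtain ⟨D, hD⟩ := hb m
    refine ⟨4 ^ m * (C + D), fun k => ?_⟩
    have := hL.sumSq (isSumSq_add_pow (a k) (b k) m)
    have e : (4 : A) ^ m * (a k ^ (2 * m) + b k ^ (2 * m))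
      = (4 ^ m : ℝ) • (a k ^ (2 * m) + b k ^ (2 * m)) := by
      rw [Algebra.smul_def, map_pow, map_ofNat]
    rw [map_sub, e, map_smul, map_add, smul_eq_mul] at this
    have h4 : (0 : ℝ) < 4 ^ m := by positivity
    have h5 : (4 : ℝ) ^ m * (L (a k ^ (2 * m)) + L (b k ^ (2 * m))) ≤ 4 ^ m * (C + D) := by
      gcongr
      exacts [hC k, hD k]
    simp only [Pi.add_apply]
    linarith
  mul_mem' := by
    intro a b ha hb m
    obtain ⟨C, hC⟩ := ha (2 * m)
    obtain ⟨D, hD⟩ := hb (2 * m)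
    refine ⟨C + D, fun k => ?_⟩
    have := hL (a k ^ (2 * m) - b k ^ (2 * m))
    have h1 := hL (a k ^ (2 * m))
    have h2 := hL (b k ^ (2 * m))
    have e : (a k ^ (2 * m) - b k ^ (2 * m)) * (a k ^ (2 * m) - b k ^ (2 * m))
      = a k ^ (2 * (2 * m)) + b k ^ (2 * (2 * m)) - (2 : ℝ) • ((a k * b k) ^ (2 * m)) := by
      rw [Algebra.smul_def]; simp only [map_ofNat]; ring
    rw [e, map_sub, map_add, map_smul, smul_eq_mul] at this
    have e1 : a k ^ (2 * m) * a k ^ (2 * m) = a k ^ (2 * (2 * m)) := by ring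
    have e2 : b k ^ (2 * m) * b k ^ (2 * m) = b k ^ (2 * (2 * m)) := by ring
    rw [e1] at h1
    rw [e2] at h2
    have h3 := hC k
    have h4 := hD k
    simp only [Pi.mul_apply]
    linarith

lemma const_mem_goodSub {ι : Type*} (hL : PosFun L) (a : A) :
    (fun _ : ι => a) ∈ goodSub (ι := ι) hL :=
  fun m => ⟨L (a ^ (2 * m)), fun _ => le_rfl⟩

lemma goodSub_bound {ι : Type*} (hL : PosFun L) {p : ι → A} (hp : p ∈ goodSub hL) :
    ∃ C : ℝ, ∀ k, |L (p k)| ≤ C := by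
  obtain ⟨C, hC⟩ := hp 1
  refine ⟨L 1 + C, fun k => ?_⟩
  have h0 := hL 1
  have h1 := hL (1 + p k)
  have h2 := hL (1 - p k)
  have h3 := hC k
  have h4 := hL (p k)
  have e1 : (1 + p k) * (1 + p k) = 1 + p k + p k + p k ^ (2 * 1) := by ring
  have e2 : (1 - p k) * (1 - p k) = 1 - p k - p k + p k ^ (2 * 1) := by ring
  have e3 : p k * p k = p k ^ (2 * 1) := by ring
  rw [e1] at h1
  rw [e2] at h2
  rw [e3] at h4
  simp only [map_add, map_sub, mul_one] at h1 h2 h3 h0 h4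
  rw [abs_le]
  constructor <;> nlinarith

end Pos


/-- coefficientwise majorisation by `M * exp (a X)` -/
def Maj (M a : ℝ) (p : Polynomial ℝ) : Prop :=
  ∀ j : ℕ, |p.coeff j| ≤ M * (a ^ j / (j.factorial : ℝ))

lemma sum_antidiagonal_exp (a b : ℝ) (j : ℕ) :
    ∑ x ∈ Finset.HasAntidiagonal.antidiagonal j,
      (a ^ x.1 / (x.1.factorial : ℝ)) * (b ^ x.2 / (x.2.factorial : ℝ))
      = (a + b) ^ j / (j.factorial : ℝ) := by
  rw [(Commute.all a b).add_pow', Finset.sum_div]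
  refine Finset.sum_congr rfl fun x hx => ?_
  rw [Finset.HasAntidiagonal.mem_antidiagonal] at hx
  subst hx
  have h := Nat.add_choose_mul_factorial_mul_factorial x.1 x.2
  rw [← Nat.choose_symm_add] at h
  have h' : ((x.1 + x.2).choose x.1 : ℝ) * x.1.factorial * x.2.factorial
      = (x.1 + x.2).factorial := by exact_mod_cast h
  rw [← h', nsmul_eq_mul]
  have h0 : ((x.1 + x.2).choose x.1 : ℝ) ≠ 0 := by
    exact_mod_cast (Nat.choose_pos (Nat.le_add_right _ _)).ne'
  have h1 : (x.1.factorial : ℝ) ≠ 0 := by exact_mod_cast Nat.factorial_ne_zero _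
  have h2 : (x.2.factorial : ℝ) ≠ 0 := by exact_mod_cast Nat.factorial_ne_zero _
  field_simp

lemma Maj.nonneg {M a : ℝ} {p} (h : Maj M a p) : 0 ≤ M := by
  have := (abs_nonneg _).trans (h 0)
  simpa using this

lemma Maj.mul {M N a b : ℝ} {p q : Polynomial ℝ} (ha : 0 ≤ a)
    (hp : Maj M a p) (hq : Maj N b q) : Maj (M * N) (a + b) (p * q) := by
  intro j
  have hM := hp.nonneg
  rw [Polynomial.coeff_mul, ← sum_antidiagonal_exp, Finset.mul_sum]
  refine (Finset.abs_sum_le_sum_abs _ _).trans (Finset.sum_le_sum fun x _ => ?_)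
  rw [abs_mul]
  calc |p.coeff x.1| * |q.coeff x.2| ≤
      (M * (a ^ x.1 / (x.1.factorial : ℝ))) * (N * (b ^ x.2 / (x.2.factorial : ℝ))) :=
        mul_le_mul (hp _) (hq _) (abs_nonneg _) (by positivity)
    _ = _ := by ring

lemma Maj.mono {M N a b : ℝ} {p : Polynomial ℝ} (ha : 0 ≤ a) (hab : a ≤ b) (hMN : M ≤ N)
    (hp : Maj M a p) : Maj N b p := by
  intro j
  have hM := hp.nonneg
  have hN := hM.trans hMN
  exact (hp j).trans (by gcongr)

lemma Maj.one : Maj 1 0 1 := by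
  intro j
  rcases j with _ | j <;> simp [Polynomial.coeff_one]

lemma Maj.pow {M a : ℝ} {p : Polynomial ℝ} (ha : 0 ≤ a) (hp : Maj M a p) (m : ℕ) :
    Maj (M ^ m) (m * a) (p ^ m) := by
  induction m with
  | zero => simpa using Maj.one
  | succ m ih =>
    rw [pow_succ, pow_succ]
    have := ih.mul (by positivity) hp
    convert this using 1
    push_cast; ring

lemma Maj.add {M N a : ℝ} {p q : Polynomial ℝ} (hp : Maj M a p) (hq : Maj N a q) :
    Maj (M + N) a (p + q) := by
  intro j
  rw [Polynomial.coeff_add, add_mul]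
  exact (abs_add_le _ _).trans (add_le_add (hp j) (hq j))

lemma Maj.sum {M a : ℝ} {p : ℕ → Polynomial ℝ} (m : ℕ) (h : ∀ l < m, Maj M a (p l)) :
    Maj (m * M) a (∑ l ∈ Finset.range m, p l) := by
  induction m with
  | zero => intro j; simp
  | succ m ih =>
    rw [Finset.sum_range_succ]
    have := (ih fun l hl => h l (by omega)).add (h m (by omega))
    convert this using 1
    push_cast; ring

lemma Maj.smul {M a : ℝ} {p : Polynomial ℝ} (c : ℝ) (hc : 0 ≤ c) (hp : Maj M a p) :
    Maj (c * M) a (c • p) := by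
  intro j
  rw [Polynomial.coeff_smul, smul_eq_mul, abs_mul, abs_of_nonneg hc, mul_assoc]
  exact mul_le_mul_of_nonneg_left (hp j) hc

/-- polynomial approximations of cosine and sine: real and imaginary part of `(1 + i b X)^m` -/
noncomputable def trigP (b : ℝ) : ℕ → Polynomial ℝ × Polynomial ℝ
  | 0 => (1, 0)
  | m + 1 => ((trigP b m).1 - Polynomial.C b * (trigP b m).2 * Polynomial.X,
      (trigP b m).2 + Polynomial.C b * (trigP b m).1 * Polynomial.X)

lemma trigP_sq (b : ℝ) (m : ℕ) :
    (trigP b m).1 * (trigP b m).1 + (trigP b m).2 * (trigP b m).2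
      = (1 + Polynomial.C (b ^ 2) * Polynomial.X ^ 2) ^ m := by
  induction m with
  | zero => simp [trigP]
  | succ m ih =>
    rw [pow_succ, ← ih, Polynomial.C_pow]
    simp only [trigP]
    ring

lemma pow_step (a b : ℝ) (ha : 0 ≤ a) (hb : 0 ≤ b) (j : ℕ) :
    a ^ (j + 1) + (j + 1) * a ^ j * b ≤ (a + b) ^ (j + 1) := by
  induction j with
  | zero => simp
  | succ j ih =>
    rw [pow_succ (a + b) (j + 1)]
    calc a ^ (j + 1 + 1) + ((j + 1 : ℕ) + 1) * a ^ (j + 1) * b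
        ≤ (a ^ (j + 1) + (j + 1) * a ^ j * b) * (a + b) := by
          have : 0 ≤ ((j : ℝ) + 1) * a ^ j * b * b := by positivity
          push_cast
          ring_nf
          ring_nf at this
          linarith
      _ ≤ _ := by gcongr

lemma step_bound (a b u v : ℝ) (ha : 0 ≤ a) (hb : 0 ≤ b) (j : ℕ)
    (hu : |u| ≤ 1 * (a ^ (j + 1) / ((j + 1).factorial : ℝ)))
    (hv : |v| ≤ 1 * (a ^ j / (j.factorial : ℝ))) :
    |u| + b * |v| ≤ 1 * ((a + b) ^ (j + 1) / ((j + 1).factorial : ℝ)) := by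
  have h := pow_step a b ha hb j
  have hf : ((j + 1).factorial : ℝ) = (j + 1) * (j.factorial : ℝ) := by
    rw [Nat.factorial_succ]; push_cast; ring
  have hp : (0 : ℝ) < (j.factorial : ℝ) := by exact_mod_cast Nat.factorial_pos j
  calc |u| + b * |v| ≤ 1 * (a ^ (j + 1) / ((j + 1).factorial : ℝ))
        + b * (1 * (a ^ j / (j.factorial : ℝ))) := by gcongr
    _ = (a ^ (j + 1) + (j + 1) * a ^ j * b) / ((j + 1).factorial : ℝ) := by
        rw [hf]; field_simp
    _ ≤ _ := by rw [one_mul]; gcongr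

lemma trigP_maj (b : ℝ) (hb : 0 ≤ b) (m : ℕ) :
    Maj 1 (m * b) (trigP b m).1 ∧ Maj 1 (m * b) (trigP b m).2 := by
  induction m with
  | zero =>
    refine ⟨by simpa [trigP] using Maj.one, fun j => ?_⟩
    simp [trigP]; positivity
  | succ m ih =>
    have hm : (((m + 1 : ℕ) : ℝ) * b) = m * b + b := by push_cast; ring
    rw [hm]
    constructor
    · intro j
      rcases j with _ | j
      · simpa [trigP] using ih.1 0
      · simp only [trigP, Polynomial.coeff_sub, Polynomial.coeff_mul_X, Polynomial.coeff_C_mul]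
        refine le_trans ?_ (step_bound _ b _ _ (by positivity) hb j (ih.1 (j + 1)) (ih.2 j))
        refine (abs_sub _ _).trans ?_
        rw [abs_mul, abs_of_nonneg hb]
    · intro j
      rcases j with _ | j
      · simpa [trigP] using ih.2 0
      · simp only [trigP, Polynomial.coeff_add, Polynomial.coeff_mul_X, Polynomial.coeff_C_mul]
        refine le_trans ?_ (step_bound _ b _ _ (by positivity) hb j (ih.2 (j + 1)) (ih.1 j))
        refine (abs_add_le _ _).trans ?_
        rw [abs_mul, abs_of_nonneg hb]

lemma trigP_coeff (b : ℝ) (m : ℕ) :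
    (trigP b m).1.coeff 0 = 1 ∧ (trigP b m).2.coeff 0 = 0 ∧ (trigP b m).2.coeff 1 = m * b := by
  induction m with
  | zero => simp [trigP]
  | succ m ih =>
    obtain ⟨h1, h2, h3⟩ := ih
    refine ⟨by simp [trigP, h1], by simp [trigP, h2], ?_⟩
    simp only [trigP, Polynomial.coeff_add]
    rw [Polynomial.coeff_mul_X _ 0, Polynomial.coeff_C_mul, h1, h3]
    push_cast; ring

/-- the scaled sine -/
noncomputable def scaledSin (N K : ℕ) : Polynomial ℝ :=
  ((N : ℝ) + 1) • (trigP (1 / (((N : ℝ) + 1) * ((K : ℝ) + 1))) (K + 1)).2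

lemma mb_eq (N K : ℕ) : (((K + 1 : ℕ) : ℝ) * (1 / (((N : ℝ) + 1) * ((K : ℝ) + 1))))
    = 1 / ((N : ℝ) + 1) := by
  push_cast; field_simp

lemma scaledSin_maj (N K : ℕ) : Maj 1 1 (scaledSin N K) := by
  intro j
  have hb : (0 : ℝ) ≤ 1 / (((N : ℝ) + 1) * ((K : ℝ) + 1)) := by positivity
  have h := (trigP_maj _ hb (K + 1)).2 j
  have h0 := (trigP_coeff (1 / (((N : ℝ) + 1) * ((K : ℝ) + 1))) (K + 1)).2.1
  rw [mb_eq] at h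
  have hN : (0 : ℝ) < (N : ℝ) + 1 := by positivity
  rw [scaledSin, Polynomial.coeff_smul, smul_eq_mul, abs_mul, abs_of_pos hN]
  rcases j with _ | j
  · rw [h0]; simp
  · calc _ ≤ ((N : ℝ) + 1) * (1 * ((1 / ((N : ℝ) + 1)) ^ (j + 1) / ((j + 1).factorial : ℝ))) := by
          gcongr
      _ = 1 * ((1 / ((N : ℝ) + 1)) ^ j / ((j + 1).factorial : ℝ)) := by
          rw [pow_succ]; field_simp
      _ ≤ _ := by
          rw [one_pow]
          have : (1 / ((N : ℝ) + 1)) ^ j ≤ 1 := by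
            apply pow_le_one₀ (by positivity)
            rw [div_le_one hN]; linarith [(Nat.cast_nonneg N : (0 : ℝ) ≤ N)]
          gcongr

lemma scaledSin_diff_maj (N K : ℕ) :
    Maj 1 1 (((N : ℝ) + 1) • (Polynomial.X - scaledSin N K)) := by
  intro j
  have hb : (0 : ℝ) ≤ 1 / (((N : ℝ) + 1) * ((K : ℝ) + 1)) := by positivity
  have h := (trigP_maj _ hb (K + 1)).2 j
  have h0 := (trigP_coeff (1 / (((N : ℝ) + 1) * ((K : ℝ) + 1))) (K + 1)).2.1
  have h1 := (trigP_coeff (1 / (((N : ℝ) + 1) * ((K : ℝ) + 1))) (K + 1)).2.2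
  rw [mb_eq] at h h1
  have hN : (0 : ℝ) < (N : ℝ) + 1 := by positivity
  rw [scaledSin, Polynomial.coeff_smul, smul_eq_mul, abs_mul, abs_of_pos hN,
    Polynomial.coeff_sub, Polynomial.coeff_smul, smul_eq_mul]
  rcases j with _ | _ | j
  · rw [h0]; simp
  · rw [zero_add, h1, Polynomial.coeff_X_one, mul_one_div_cancel hN.ne']; simp
  · have : (Polynomial.X : Polynomial ℝ).coeff (j + 1 + 1) = 0 := by
      rw [Polynomial.coeff_X]; simp
    rw [this, zero_sub, abs_neg, abs_mul, abs_of_pos hN]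
    calc _ ≤ ((N : ℝ) + 1) * (((N : ℝ) + 1) *
            (1 * ((1 / ((N : ℝ) + 1)) ^ (j + 1 + 1) / ((j + 1 + 1).factorial : ℝ)))) := by
          gcongr
      _ = 1 * ((1 / ((N : ℝ) + 1)) ^ j / ((j + 1 + 1).factorial : ℝ)) := by
          rw [pow_succ, pow_succ]; field_simp
      _ ≤ _ := by
          rw [one_pow]
          have : (1 / ((N : ℝ) + 1)) ^ j ≤ 1 := by
            apply pow_le_one₀ (by positivity)
            rw [div_le_one hN]; linarith [(Nat.cast_nonneg N : (0 : ℝ) ≤ N)]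
          gcongr

lemma maj_quad (b : ℝ) (hb : 0 ≤ b) :
    Maj 1 (2 * b) (1 + Polynomial.C (b ^ 2) * Polynomial.X ^ 2) := by
  intro j
  rw [Polynomial.coeff_add, Polynomial.coeff_C_mul, Polynomial.coeff_X_pow, Polynomial.coeff_one]
  rcases j with _ | _ | _ | j
  · simp
  · simp; positivity
  · simp [Nat.factorial]; nlinarith [sq_nonneg b]
  · simp; positivity

lemma maj_X2 (b : ℝ) : Maj (2 * b ^ 2) 1 (Polynomial.C (b ^ 2) * Polynomial.X ^ 2) := by
  intro j
  rw [Polynomial.coeff_C_mul, Polynomial.coeff_X_pow]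
  rcases eq_or_ne j 2 with rfl | h
  · simp [Nat.factorial]; linarith
  · simp [h]; positivity

lemma err_maj (N K : ℕ) :
    let t := trigP (1 / (((N : ℝ) + 1) * ((K : ℝ) + 1))) (K + 1)
    Maj 2 3 (((K : ℝ) + 1) • (t.1 * t.1 + t.2 * t.2 - 1)) := by
  intro t
  set b : ℝ := 1 / (((N : ℝ) + 1) * ((K : ℝ) + 1)) with hbdef
  have hb : 0 ≤ b := by positivity
  have hbK : ((K : ℝ) + 1) * b ≤ 1 := by
    have := mb_eq N K
    rw [← hbdef] at this
    push_cast at this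
    rw [this, div_le_one (by positivity)]
    linarith [(Nat.cast_nonneg N : (0 : ℝ) ≤ N)]
  rw [trigP_sq, ← mul_geom_sum, Finset.mul_sum]
  have hs : ∀ l < K + 1, Maj (2 * b ^ 2) 3
      ((1 + Polynomial.C (b ^ 2) * Polynomial.X ^ 2 - 1) *
        (1 + Polynomial.C (b ^ 2) * Polynomial.X ^ 2) ^ l) := by
    intro l hl
    rw [add_sub_cancel_left]
    have h1 := (maj_X2 b).mul zero_le_one ((maj_quad b hb).pow (by positivity) l)
    refine h1.mono (by positivity) ?_ (by simp)
    have : (l : ℝ) ≤ K + 1 := by exact_mod_cast hl.le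
    nlinarith
  have h2 := (Maj.sum (K + 1) hs).smul ((K : ℝ) + 1) (by positivity)
  refine h2.mono (by norm_num) le_rfl ?_
  push_cast
  have h3 : 0 ≤ ((K : ℝ) + 1) * b := by positivity
  nlinarith

section
variable {A : Type*} [CommRing A] [Algebra ℝ A] {L : A →ₗ[ℝ] ℝ}

lemma maj_good {ι : Type*} (hL : PosFun L) (x : A) (B : ℝ)
    (hx : ∀ k : ℕ, L (x ^ (2 * k)) ≤ B * (k.factorial : ℝ)) (M a : ℝ) (ha : 0 ≤ a)
    (p : ι → Polynomial ℝ) (hp : ∀ k, Maj M a (p k)) :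
    (fun k => Polynomial.aeval x (p k)) ∈ goodSub (ι := ι) hL := by
  intro m
  set b : ℝ := ((2 * m : ℕ) : ℝ) * a with hb
  have hb0 : 0 ≤ b := by positivity
  set τ : ℝ := 2 * b + 1 with hτ
  have hτ0 : 0 < τ := by positivity
  have h1 : 0 ≤ L 1 := by simpa using hL 1
  have hB : 0 ≤ B := by
    have h := hx 0
    simp at h
    exact h1.trans h
  have hmom : ∀ j : ℕ, |L (x ^ j)| ≤ τ ^ j * L 1 + B * (j.factorial : ℝ) / τ ^ j := by
    intro j
    have ht : 0 < τ ^ j := by positivity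
    have hp := hL (algebraMap ℝ A (τ ^ j) + x ^ j)
    have hm := hL (algebraMap ℝ A (τ ^ j) - x ^ j)
    have e1 : (algebraMap ℝ A (τ ^ j) + x ^ j) * (algebraMap ℝ A (τ ^ j) + x ^ j)
        = (τ ^ j * τ ^ j) • (1 : A) + (2 * τ ^ j) • x ^ j + x ^ (2 * j) := by
      simp only [Algebra.smul_def, map_mul, map_ofNat]; ring
    have e2 : (algebraMap ℝ A (τ ^ j) - x ^ j) * (algebraMap ℝ A (τ ^ j) - x ^ j)
        = (τ ^ j * τ ^ j) • (1 : A) - (2 * τ ^ j) • x ^ j + x ^ (2 * j) := by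
      simp only [Algebra.smul_def, map_mul, map_ofNat]; ring
    rw [e1] at hp
    rw [e2] at hm
    simp only [map_add, map_sub, map_smul, smul_eq_mul] at hp hm
    have hxj := hx j
    have h0 : 0 ≤ B * (j.factorial : ℝ) := by positivity
    have key : |L (x ^ j)| * τ ^ j ≤ τ ^ j * τ ^ j * L 1 + B * (j.factorial : ℝ) := by
      have h5 : 0 ≤ τ ^ j * τ ^ j * L 1 := by positivity
      rcases abs_cases (L (x ^ j)) with ⟨h, _⟩ | ⟨h, _⟩ <;> rw [h] <;> nlinarith
    rw [← le_div_iff₀ ht] at key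
    refine key.trans (le_of_eq ?_)
    field_simp
  have hsum : Summable fun j : ℕ => M ^ (2 * m) * (b ^ j / (j.factorial : ℝ)) *
      (τ ^ j * L 1 + B * (j.factorial : ℝ) / τ ^ j) := by
    have s1 : Summable fun j : ℕ => M ^ (2 * m) * L 1 * ((b * τ) ^ j / (j.factorial : ℝ)) :=
      (Real.summable_pow_div_factorial _).mul_left _
    have s2 : Summable fun j : ℕ => M ^ (2 * m) * B * (b / τ) ^ j := by
      refine (summable_geometric_of_lt_one (by positivity) ?_).mul_left _
      rw [div_lt_one hτ0]; linarith
    refine (s1.add s2).congr fun j => ?_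
    have hj : (j.factorial : ℝ) ≠ 0 := by exact_mod_cast Nat.factorial_ne_zero _
    rw [mul_pow, div_pow]
    field_simp
  refine ⟨∑' j : ℕ, M ^ (2 * m) * (b ^ j / (j.factorial : ℝ)) *
      (τ ^ j * L 1 + B * (j.factorial : ℝ) / τ ^ j), fun k => ?_⟩
  have hk := (hp k).pow ha (2 * m)
  rw [← map_pow, Polynomial.aeval_eq_sum_range, map_sum]
  have hM := (hp k).nonneg
  refine (Finset.sum_le_sum fun j _ => ?_).trans
    (hsum.sum_le_tsum (Finset.range ((p k ^ (2 * m)).natDegree + 1)) fun j _ => by positivity)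
  rw [map_smul, smul_eq_mul]
  refine (le_abs_self _).trans ?_
  rw [abs_mul]
  exact mul_le_mul (hk j) (hmom j) (abs_nonneg _) (by positivity)

end


lemma abs_prod_sub_prod_le_sum {ι : Type*} (s : Finset ι) (a b : ι → ℝ)
    (ha : ∀ i, 0 ≤ a i ∧ a i ≤ 1) (hb : ∀ i, 0 ≤ b i ∧ b i ≤ 1) :
    |∏ i ∈ s, a i - ∏ i ∈ s, b i| ≤ ∑ i ∈ s, |a i - b i| := by
  classical
  induction s using Finset.induction_on with
  | empty => simp
  | insert i s hi ih =>
    rw [Finset.prod_insert hi, Finset.prod_insert hi, Finset.sum_insert hi]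
    have e : a i * ∏ i ∈ s, a i - b i * ∏ i ∈ s, b i
      = (a i - b i) * ∏ i ∈ s, a i + b i * (∏ i ∈ s, a i - ∏ i ∈ s, b i) := by ring
    rw [e]
    refine (abs_add_le _ _).trans (add_le_add ?_ (le_trans ?_ ih))
    · rw [abs_mul]
      refine mul_le_of_le_one_right (abs_nonneg _) ?_
      rw [abs_of_nonneg (Finset.prod_nonneg fun i _ => (ha i).1)]
      exact Finset.prod_le_one (fun i _ => (ha i).1) fun i _ => (ha i).2
    · rw [abs_mul, abs_of_nonneg (hb i).1]
      exact mul_le_of_le_one_left (abs_nonneg _) (hb i).2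

/-- coefficients of `x^j` in the Bernstein basis of degree `k` -/
noncomputable def coefB (k v j : ℕ) : ℝ := (v.choose j : ℝ) / (k.choose j : ℝ)

lemma coefB_mem (k v j : ℕ) (hv : v ≤ k) : 0 ≤ coefB k v j ∧ coefB k v j ≤ 1 := by
  unfold coefB
  refine ⟨by positivity, div_le_one_of_le₀ ?_ (by positivity)⟩
  exact_mod_cast Nat.choose_le_choose j hv

lemma coefB_err (k v j : ℕ) (hv : v ≤ k) (hj : j < k) :
    |coefB k v j - ((v : ℝ) / k) ^ j| ≤ (j : ℝ) ^ 2 / ((k : ℝ) - j) := by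
  induction j with
  | zero => simp [coefB]
  | succ j ih =>
    have ih := ih (by omega)
    have hkj : (0 : ℝ) < (k : ℝ) - j := by
      have : (j : ℝ) < k := by exact_mod_cast (by omega : j < k)
      linarith
    have hkj1 : (0 : ℝ) < (k : ℝ) - (j + 1 : ℕ) := by
      have : ((j + 1 : ℕ) : ℝ) < k := by exact_mod_cast hj
      linarith
    have hk : (0 : ℝ) < k := by
      have : (0 : ℝ) ≤ j := by positivity
      linarith
    have hvk : (v : ℝ) / k ≤ 1 := div_le_one_of_le₀ (by exact_mod_cast hv) hk.le
    have e : coefB k v (j + 1) = coefB k v j * (((v - j : ℕ) : ℝ) / ((k : ℝ) - j)) := by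
      unfold coefB
      have h1 : ((v.choose (j + 1) : ℕ) : ℝ) * ((j : ℝ) + 1) = v.choose j * ((v - j : ℕ) : ℝ) := by
        exact_mod_cast Nat.choose_succ_right_eq v j
      have h2 : ((k.choose (j + 1) : ℕ) : ℝ) * ((j : ℝ) + 1) = k.choose j * ((k : ℝ) - j) := by
        have := Nat.choose_succ_right_eq k j
        rw [← Nat.cast_sub (by omega)]
        exact_mod_cast this
      have hj1 : (j : ℝ) + 1 ≠ 0 := by positivity
      rw [div_mul_div_comm, ← h1, ← h2, mul_div_mul_right _ _ hj1]
    have ht : |((v - j : ℕ) : ℝ) / ((k : ℝ) - j) - (v : ℝ) / k| ≤ j / ((k : ℝ) - j) := by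
      rcases le_or_gt j v with h | h
      · rw [Nat.cast_sub h]
        have e2 : ((v : ℝ) - j) / ((k : ℝ) - j) - (v : ℝ) / k
            = - ((j / ((k : ℝ) - j)) * (1 - (v : ℝ) / k)) := by
          field_simp; ring
        have h0 : (0 : ℝ) ≤ (v : ℝ) / k := by positivity
        rw [e2, abs_neg, abs_mul, abs_of_nonneg (by positivity : 0 ≤ (j : ℝ) / ((k : ℝ) - j))]
        refine mul_le_of_le_one_right (by positivity) ?_
        rw [abs_of_nonneg (by linarith)]; linarith
      · rw [Nat.sub_eq_zero_of_le h.le]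
        rw [Nat.cast_zero, zero_div, zero_sub, abs_neg, abs_of_nonneg (by positivity)]
        have h' : (v : ℝ) ≤ j := by exact_mod_cast h.le
        have : (k : ℝ) - j ≤ k := by linarith [(Nat.cast_nonneg j : (0 : ℝ) ≤ j)]
        gcongr
    have e3 : coefB k v (j + 1) - ((v : ℝ) / k) ^ (j + 1)
        = coefB k v j * (((v - j : ℕ) : ℝ) / ((k : ℝ) - j) - (v : ℝ) / k)
          + (coefB k v j - ((v : ℝ) / k) ^ j) * ((v : ℝ) / k) := by
      rw [e]; ring
    have hm := coefB_mem k v j hv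
    rw [e3]
    calc _ ≤ _ := abs_add_le _ _
      _ ≤ 1 * (j / ((k : ℝ) - j)) + (j : ℝ) ^ 2 / ((k : ℝ) - j) * 1 := by
          rw [abs_mul, abs_mul, abs_of_nonneg hm.1,
            abs_of_nonneg (by positivity : 0 ≤ (v : ℝ) / k)]
          gcongr
          exact hm.2
      _ = ((j : ℝ) + j ^ 2) / ((k : ℝ) - j) := by ring
      _ ≤ (((j + 1 : ℕ) : ℝ)) ^ 2 / ((k : ℝ) - (j + 1 : ℕ)) := by
          apply div_le_div₀ (by positivity) _ hkj1 (by push_cast; linarith)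
          push_cast
          nlinarith [(Nat.cast_nonneg j : (0 : ℝ) ≤ j)]

/-- Bernstein basis elements -/
def bernE {R : Type*} [CommRing R] (k v : ℕ) (x : R) : R :=
  (k.choose v : R) * (x ^ v * (1 - x) ^ (k - v))

lemma bern_expand {R : Type*} [CommRing R] [Algebra ℝ R] (x : R) (k j : ℕ) (hj : j ≤ k) :
    x ^ j = ∑ v ∈ Finset.range (k + 1), algebraMap ℝ R (coefB k v j) * bernE k v x := by
  obtain ⟨d, rfl⟩ := Nat.exists_eq_add_of_le hj
  rw [add_assoc, Finset.sum_range_add, Finset.sum_eq_zero, zero_add]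
  · have h1 : (x + (1 - x)) ^ d = 1 := by simp
    have h2 : x ^ j = x ^ j * (x + (1 - x)) ^ d := by rw [h1, mul_one]
    rw [h2, add_pow, Finset.mul_sum]
    refine Finset.sum_congr rfl fun l hl => ?_
    have hl : l ≤ d := by
      have := Finset.mem_range.1 hl
      omega
    unfold bernE coefB
    have hc := Nat.choose_mul (n := j + d) (k := j + l) (s := j) (by omega)
    rw [show j + d - j = d by omega, show j + l - j = l by omega] at hc
    have hc' : ((j + d).choose (j + l) : ℝ) * ((j + l).choose j : ℝ)
        = ((j + d).choose j : ℝ) * (d.choose l : ℝ) := by exact_mod_cast hc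
    have h0 : ((j + d).choose j : ℝ) ≠ 0 := by
      exact_mod_cast (Nat.choose_pos (by omega)).ne'
    have e : algebraMap ℝ R (((j + l).choose j : ℝ) / ((j + d).choose j : ℝ))
        * (((j + d).choose (j + l) : ℕ) : R) = ((d.choose l : ℕ) : R) := by
      rw [← map_natCast (algebraMap ℝ R) ((j + d).choose (j + l)), ← map_mul,
        ← map_natCast (algebraMap ℝ R) (d.choose l)]
      congr 1
      field_simp
      linarith
    rw [← e, show j + d - (j + l) = d - l by omega, pow_add]
    ring
  · intro v hv
    have : v.choose j = 0 := Nat.choose_eq_zero_of_lt (Finset.mem_range.1 hv)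
    simp [coefB, this]

lemma handelman (n : ℕ) (Q : MvPolynomial (Fin n) ℝ)
    (hQ : ∀ x : Fin n → ℝ, (∀ i, 0 ≤ x i ∧ x i ≤ 1) → 0 ≤ eval x Q) (δ : ℝ) (hδ : 0 < δ)
    (S : Subsemiring (MvPolynomial (Fin n) ℝ)) (hC : ∀ c : ℝ, 0 ≤ c → C c ∈ S)
    (hX : ∀ i, X i ∈ S) (hX1 : ∀ i, 1 - X i ∈ S) : Q + C δ ∈ S := by
  classical
  set D : ℕ := Q.support.sup fun α => Finset.univ.sup fun i => α i with hD
  have hαD : ∀ α ∈ Q.support, ∀ i, α i ≤ D := fun α hα i =>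
    (Finset.le_sup (f := fun i => α i) (Finset.mem_univ i)).trans
      (Finset.le_sup (f := fun α : Fin n →₀ ℕ => Finset.univ.sup fun i => α i) hα)
  set q : ℝ := ∑ α ∈ Q.support, |coeff α Q| with hq
  have hq0 : 0 ≤ q := Finset.sum_nonneg fun _ _ => abs_nonneg _
  obtain ⟨t, ht⟩ := exists_nat_gt (q * (n * (D : ℝ) ^ 2) / δ)
  set k : ℕ := D + t + 1 with hk
  have hkD : (0 : ℝ) < (k : ℝ) - D := by rw [hk]; push_cast; linarith [(Nat.cast_nonneg t : (0:ℝ) ≤ t)]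
  have hsmall : q * (n * ((D : ℝ) ^ 2 / ((k : ℝ) - D))) ≤ δ := by
    rw [div_lt_iff₀ hδ] at ht
    have : q * (n * ((D : ℝ) ^ 2 / ((k : ℝ) - D))) = q * (n * (D : ℝ) ^ 2) / ((k : ℝ) - D) := by
      ring
    rw [this, div_le_iff₀ hkD, hk]
    push_cast
    nlinarith
  have hk0 : (0 : ℝ) < k := by rw [hk]; positivity
  let I : Finset (Fin n → ℕ) := Fintype.piFinset fun _ => Finset.range (k + 1)
  have hI : ∀ v ∈ I, ∀ i, v i ≤ k := fun v hv i => by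
    have := Finset.mem_range.1 (Fintype.mem_piFinset.1 hv i)
    omega
  let κ : (Fin n → ℕ) → ℝ := fun v => ∑ α ∈ Q.support, coeff α Q * ∏ i, coefB k (v i) (α i)
  have hκ : ∀ v ∈ I, 0 ≤ κ v + δ := by
    intro v hv
    have hpt := hQ (fun i => (v i : ℝ) / k) fun i =>
      ⟨by positivity, div_le_one_of_le₀ (by exact_mod_cast hI v hv i) hk0.le⟩
    rw [MvPolynomial.eval_eq'] at hpt
    have hdiff : |κ v - ∑ α ∈ Q.support, coeff α Q * ∏ i, ((v i : ℝ) / k) ^ α i| ≤ δ := by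
      rw [← Finset.sum_sub_distrib]
      refine (Finset.abs_sum_le_sum_abs _ _).trans (le_trans ?_ hsmall)
      rw [hq, Finset.sum_mul]
      refine Finset.sum_le_sum fun α hα => ?_
      rw [← mul_sub, abs_mul]
      refine mul_le_mul_of_nonneg_left ?_ (abs_nonneg _)
      refine (abs_prod_sub_prod_le_sum _ _ _ (fun i => coefB_mem _ _ _ (hI v hv i))
        (fun i => ⟨by positivity, pow_le_one₀ (by positivity)
          (div_le_one_of_le₀ (by exact_mod_cast hI v hv i) hk0.le)⟩)).trans ?_
      have : ∀ i ∈ (Finset.univ : Finset (Fin n)),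
          |coefB k (v i) (α i) - ((v i : ℝ) / k) ^ α i| ≤ (D : ℝ) ^ 2 / ((k : ℝ) - D) := by
        intro i _
        have hd := hαD α hα i
        refine (coefB_err k (v i) (α i) (hI v hv i) (by omega)).trans ?_
        have : ((α i : ℕ) : ℝ) ≤ D := by exact_mod_cast hd
        gcongr
      refine (Finset.sum_le_card_nsmul _ _ _ this).trans ?_
      simp
    have := (abs_le.1 hdiff).1
    linarith
  have hexp : Q + C δ = ∑ v ∈ I, C (κ v + δ) * ∏ i, bernE k (v i) (X i) := by
    have h1 : (1 : MvPolynomial (Fin n) ℝ) = ∑ v ∈ I, ∏ i, bernE k (v i) (X i) := by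
      refine Eq.trans ?_ (Finset.prod_univ_sum (fun _ : Fin n => Finset.range (k + 1))
        (fun i v => bernE k v (X i : MvPolynomial (Fin n) ℝ)))
      symm
      refine Finset.prod_eq_one fun i _ => ?_
      have := bern_expand (X i : MvPolynomial (Fin n) ℝ) k 0 (by omega)
      simpa [coefB] using this.symm
    have h2 : Q = ∑ v ∈ I, C (κ v) * ∏ i, bernE k (v i) (X i) := by
      conv_lhs => rw [← MvPolynomial.eval₂_eta Q, MvPolynomial.eval₂_eq']
      have : ∀ α ∈ Q.support, C (coeff α Q) * ∏ i, (X i : MvPolynomial (Fin n) ℝ) ^ α i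
          = ∑ v ∈ I, C (coeff α Q * ∏ i, coefB k (v i) (α i)) * ∏ i, bernE k (v i) (X i) := by
        intro α hα
        have e : ∀ i ∈ (Finset.univ : Finset (Fin n)), (X i : MvPolynomial (Fin n) ℝ) ^ α i
            = ∑ v ∈ Finset.range (k + 1), C (coefB k v (α i)) * bernE k v (X i) := by
          intro i _
          have hd := hαD α hα i
          exact bern_expand (X i : MvPolynomial (Fin n) ℝ) k (α i) (by omega)
        rw [Finset.prod_congr rfl e, Finset.prod_univ_sum, Finset.mul_sum]
        refine Finset.sum_congr rfl fun v _ => ?_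
        rw [Finset.prod_mul_distrib, map_mul, map_prod]
        ring
      rw [Finset.sum_congr rfl this, Finset.sum_comm]
      refine Finset.sum_congr rfl fun v _ => ?_
      rw [← Finset.sum_mul, ← map_sum]
    calc Q + C δ = Q + C δ * 1 := by rw [mul_one]
      _ = _ := by
        rw [h1, Finset.mul_sum]
        nth_rewrite 1 [h2]
        rw [← Finset.sum_add_distrib]
        refine Finset.sum_congr rfl fun v _ => ?_
        rw [map_add]; ring
  rw [hexp]
  refine Subsemiring.sum_mem _ fun v hv => S.mul_mem (hC _ (hκ v hv)) ?_
  refine Subsemiring.prod_mem _ fun i _ => ?_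
  unfold bernE
  exact S.mul_mem (natCast_mem S _) (S.mul_mem (S.pow_mem (hX i) _) (S.pow_mem (hX1 i) _))


section
variable {A : Type*} [CommRing A] [Algebra ℝ A] {L : A →ₗ[ℝ] ℝ}

lemma inv_family_good (hL : PosFun L) :
    (fun k : ℕ => algebraMap ℝ A (1 / ((k : ℝ) + 1))) ∈ goodSub (ι := ℕ) hL := by
  intro m
  refine ⟨L 1, fun k => ?_⟩
  have h1 : 0 ≤ L 1 := by simpa using hL 1
  have : (algebraMap ℝ A (1 / ((k : ℝ) + 1))) ^ (2 * m)
      = ((1 / ((k : ℝ) + 1)) ^ (2 * m)) • (1 : A) := by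
    rw [Algebra.smul_def, map_pow, mul_one]
  simp only [this, map_smul, smul_eq_mul]
  refine mul_le_of_le_one_left h1 (pow_le_one₀ (by positivity) ?_)
  rw [div_le_one (by positivity)]
  linarith [(Nat.cast_nonneg k : (0 : ℝ) ≤ k)]

/-- the families which are sums of squares up to `O(1/K)` -/
def almostPos (hL : PosFun L) : Subsemiring (ℕ → A) where
  carrier := {q | ∃ σ r : ℕ → A, q = σ + (fun k : ℕ => algebraMap ℝ A (1 / ((k : ℝ) + 1))) * r ∧
    σ ∈ goodSub hL ∧ r ∈ goodSub hL ∧ ∀ k, IsSumSq (σ k)}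
  zero_mem' := ⟨0, 0, by simp, zero_mem _, zero_mem _, fun _ => IsSumSq.zero⟩
  one_mem' := ⟨1, 0, by simp, one_mem _, zero_mem _, fun _ => IsSumSq.one⟩
  add_mem' := by
    rintro _ _ ⟨σ, r, rfl, h1, h2, h3⟩ ⟨σ', r', rfl, h1', h2', h3'⟩
    exact ⟨σ + σ', r + r', by ring, add_mem h1 h1', add_mem h2 h2',
      fun k => (h3 k).add (h3' k)⟩
  mul_mem' := by
    rintro _ _ ⟨σ, r, rfl, h1, h2, h3⟩ ⟨σ', r', rfl, h1', h2', h3'⟩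
    refine ⟨σ * σ', σ * r' + r * σ' +
      (fun k : ℕ => algebraMap ℝ A (1 / ((k : ℝ) + 1))) * (r * r'), by ring,
      mul_mem h1 h1', ?_, fun k => (h3 k).mul (h3' k)⟩
    exact add_mem (add_mem (mul_mem h1 h2') (mul_mem h2 h1'))
      (mul_mem (inv_family_good hL) (mul_mem h2 h2'))

lemma almostPos_bound (hL : PosFun L) {q : ℕ → A} (hq : q ∈ almostPos hL) :
    ∃ C : ℝ, ∀ k : ℕ, -(C / ((k : ℝ) + 1)) ≤ L (q k) := by
  obtain ⟨σ, r, rfl, h1, h2, h3⟩ := hq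
  obtain ⟨C, hC⟩ := goodSub_bound hL h2
  refine ⟨C, fun k => ?_⟩
  have e : (σ + (fun k : ℕ => algebraMap ℝ A (1 / ((k : ℝ) + 1))) * r) k
      = σ k + (1 / ((k : ℝ) + 1)) • r k := by
    simp [Algebra.smul_def]
  rw [e, map_add, map_smul, smul_eq_mul]
  have h4 := hL.sumSq (h3 k)
  have h5 := (abs_le.1 (hC k)).1
  have h6 : (1 / ((k : ℝ) + 1)) * (-C) ≤ (1 / ((k : ℝ) + 1)) * L (r k) := by gcongr
  have h7 : -(C / ((k : ℝ) + 1)) = (1 / ((k : ℝ) + 1)) * (-C) := by ring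
  linarith

lemma aeval_pi {ι : Type*} {n : ℕ} (u : Fin n → ι → A) (Q : MvPolynomial (Fin n) ℝ) (k : ι) :
    (aeval u Q) k = aeval (fun i => u i k) Q := by
  have := MvPolynomial.comp_aeval_apply (R := ℝ) (f := u) (Pi.evalAlgHom ℝ (fun _ : ι => A) k) Q
  simpa using this

lemma half_mem (hL : PosFun L) (c s : ℕ → A) (hc : c ∈ goodSub hL) (hs : s ∈ goodSub hL)
    (he : (fun k : ℕ => ((k : ℝ) + 1) • (c k * c k + s k * s k - 1)) ∈ goodSub hL) :
    (fun k => (1 / 2 : ℝ) • (1 + s k)) ∈ almostPos hL := by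
  refine ⟨fun k => (1 / 4 : ℝ) • ((1 + s k) * (1 + s k) + c k * c k),
    fun k => (-(1 / 4) : ℝ) • (((k : ℝ) + 1) • (c k * c k + s k * s k - 1)), ?_, ?_, ?_, ?_⟩
  · funext k
    have hk : (k : ℝ) + 1 ≠ 0 := by positivity
    have e : algebraMap ℝ A (1 / ((k : ℝ) + 1)) * algebraMap ℝ A ((k : ℝ) + 1) = 1 := by
      rw [← map_mul, one_div_mul_cancel hk, map_one]
    have e4 : algebraMap ℝ A (1 / 2) = 2 * algebraMap ℝ A (1 / 4) := by
      rw [← map_ofNat (algebraMap ℝ A) 2, ← map_mul]; norm_num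
    simp only [Pi.add_apply, Pi.mul_apply, Algebra.smul_def, map_neg, e4]
    linear_combination (algebraMap ℝ A (1 / 4)) * (c k * c k + s k * s k - 1) * e
  · exact (goodSub hL).smul_mem (add_mem (mul_mem (add_mem (one_mem _) hs)
      (add_mem (one_mem _) hs)) (mul_mem hc hc)) _
  · exact (goodSub hL).smul_mem he _
  · intro k
    simp only [Algebra.smul_def]
    exact (isSumSq_algebraMap (by norm_num)).mul
      ((IsSumSq.mul_self _).add (IsSumSq.mul_self _))

/-- Moment-type theorem: a functional which is nonnegative on squares and whose moments
grow slowly is nonnegative on nonnegative polynomials. -/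
theorem core_pos (hL : PosFun L) {n : ℕ} (x : Fin n → A) (B : ℝ)
    (hx : ∀ i, ∀ k : ℕ, L (x i ^ (2 * k)) ≤ B * (k.factorial : ℝ))
    (P : MvPolynomial (Fin n) ℝ) (hP : ∀ z : Fin n → ℝ, 0 ≤ eval z P) :
    0 ≤ L (aeval x P) := by
  have h1 : 0 ≤ L 1 := by simpa using hL 1
  -- part A
  have partA : ∀ N : ℕ, ∀ δ > 0, ∃ K : ℕ,
      -δ ≤ L (aeval (fun i => Polynomial.aeval (x i) (scaledSin N K)) P) := by
    intro N δ hδ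
    let t : ℕ → Polynomial ℝ × Polynomial ℝ :=
      fun K => trigP (1 / (((N : ℝ) + 1) * ((K : ℝ) + 1))) (K + 1)
    let c : Fin n → ℕ → A := fun i K => Polynomial.aeval (x i) (t K).1
    let s : Fin n → ℕ → A := fun i K => Polynomial.aeval (x i) (t K).2
    have hmaj : ∀ K, Maj 1 1 (t K).1 ∧ Maj 1 1 (t K).2 := by
      intro K
      have hb : (0 : ℝ) ≤ 1 / (((N : ℝ) + 1) * ((K : ℝ) + 1)) := by positivity
      have := trigP_maj _ hb (K + 1)
      rw [mb_eq] at this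
      have hle : 1 / ((N : ℝ) + 1) ≤ 1 := by
        rw [div_le_one (by positivity)]
        linarith [(Nat.cast_nonneg N : (0 : ℝ) ≤ N)]
      exact ⟨this.1.mono (by positivity) hle le_rfl, this.2.mono (by positivity) hle le_rfl⟩
    have hc : ∀ i, c i ∈ goodSub hL := fun i =>
      maj_good hL (x i) B (hx i) 1 1 zero_le_one _ fun K => (hmaj K).1
    have hs : ∀ i, s i ∈ goodSub hL := fun i =>
      maj_good hL (x i) B (hx i) 1 1 zero_le_one _ fun K => (hmaj K).2
    have he : ∀ i, (fun k : ℕ => ((k : ℝ) + 1) • (c i k * c i k + s i k * s i k - 1))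
        ∈ goodSub hL := by
      intro i
      have := maj_good hL (x i) B (hx i) 2 3 (by norm_num) _ fun K => err_maj N K
      simpa only [map_smul, map_sub, map_add, map_mul, map_one] using this
    have he' : ∀ i, (fun k : ℕ => ((k : ℝ) + 1) • (c i k * c i k + (-s i) k * (-s i) k - 1))
        ∈ goodSub hL := by
      intro i
      simpa only [Pi.neg_apply, neg_mul_neg] using he i
    let u : Fin n → ℕ → A := fun i K => (1 / 2 : ℝ) • (1 + s i K)
    have hu : ∀ i, u i ∈ almostPos hL := fun i => half_mem hL (c i) (s i) (hc i) (hs i) (he i)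
    have hu1 : ∀ i, 1 - u i ∈ almostPos hL := by
      intro i
      have := half_mem hL (c i) (-s i) (hc i) (neg_mem (hs i)) (he' i)
      convert this using 1
      funext k
      have e2 : 2 * algebraMap ℝ A (1 / 2) = 1 := by
        rw [← map_ofNat (algebraMap ℝ A) 2, ← map_mul]; norm_num
      simp only [u, Pi.sub_apply, Pi.one_apply, Pi.neg_apply, Algebra.smul_def]
      linear_combination -e2
    let y : Fin n → MvPolynomial (Fin n) ℝ := fun i => C ((N : ℝ) + 1) * (2 * X i - 1)
    let Q : MvPolynomial (Fin n) ℝ := aeval y P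
    have hQ : ∀ z : Fin n → ℝ, 0 ≤ eval z Q := by
      intro z
      have : eval z Q = eval (fun i => eval z (y i)) P := by
        have := MvPolynomial.comp_aeval_apply (R := ℝ) (f := y) (aeval z : _ →ₐ[ℝ] ℝ) P
        simp only [MvPolynomial.aeval_eq_eval] at this
        exact this
      rw [this]; exact hP _
    set δ' : ℝ := δ / (2 * (L 1 + 1)) with hδ'
    have hδ'0 : 0 < δ' := by positivity
    have hmem := handelman n Q (fun z _ => hQ z) δ' hδ'0
      ((almostPos hL).comap (aeval u : MvPolynomial (Fin n) ℝ →ₐ[ℝ] (ℕ → A)).toRingHom)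
      (by
        intro c hc
        rw [Subsemiring.mem_comap]
        refine ⟨algebraMap ℝ (ℕ → A) c, 0, by simp, (goodSub hL).algebraMap_mem c,
          zero_mem _, fun k => ?_⟩
        exact isSumSq_algebraMap hc)
      (by intro i; rw [Subsemiring.mem_comap]; simpa using hu i)
      (by intro i; rw [Subsemiring.mem_comap]; simpa using hu1 i)
    rw [Subsemiring.mem_comap] at hmem
    obtain ⟨D, hD⟩ := almostPos_bound hL hmem
    obtain ⟨K, hK⟩ := exists_nat_gt (D / (δ / 2))
    refine ⟨K, ?_⟩
    have h2 := hD K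
    have e1 : ((aeval u : MvPolynomial (Fin n) ℝ →ₐ[ℝ] (ℕ → A)).toRingHom (Q + C δ')) K
        = aeval (fun i => Polynomial.aeval (x i) (scaledSin N K)) P + δ' • (1 : A) := by
      have e2 : ((aeval u : MvPolynomial (Fin n) ℝ →ₐ[ℝ] (ℕ → A)).toRingHom (Q + C δ'))
          = aeval u Q + algebraMap ℝ (ℕ → A) δ' := by
        simp
      rw [e2, Pi.add_apply, aeval_pi]
      congr 1
      · have := MvPolynomial.comp_aeval_apply (R := ℝ) (f := y)
          (aeval (fun i => u i K) : MvPolynomial (Fin n) ℝ →ₐ[ℝ] A) P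
        rw [this]
        congr 2
        funext i
        have e2 : 2 * algebraMap ℝ A (1 / 2) = 1 := by
          rw [← map_ofNat (algebraMap ℝ A) 2, ← map_mul]; norm_num
        simp only [y, u, s, t, scaledSin, map_smul]
        simp only [map_mul, map_sub, map_one, aeval_X,
          map_ofNat, Algebra.smul_def, MvPolynomial.algHom_C]
        linear_combination (algebraMap ℝ A ((N : ℝ) + 1)) *
          (1 + Polynomial.aeval (x i) (trigP (1 / (((N : ℝ) + 1) * ((K : ℝ) + 1))) (K + 1)).2) * e2
      · rw [Algebra.smul_def, mul_one]; rfl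
    rw [e1, map_add, map_smul, smul_eq_mul] at h2
    have h3 : δ' * L 1 ≤ δ / 2 := by
      rw [hδ', div_mul_eq_mul_div, div_le_div_iff₀ (by positivity) (by norm_num)]
      nlinarith
    have h4 : D / ((K : ℝ) + 1) ≤ δ / 2 := by
      rw [div_lt_iff₀ (by positivity)] at hK
      rw [div_le_iff₀ (by positivity)]
      nlinarith
    linarith
  -- part B
  let S : Fin n → ℕ × ℕ → A := fun i k => Polynomial.aeval (x i) (scaledSin k.1 k.2)
  have hS : ∀ i, S i ∈ goodSub hL := fun i =>
    maj_good hL (x i) B (hx i) 1 1 zero_le_one _ fun k => scaledSin_maj k.1 k.2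
  have hSd : ∀ i, (fun k : ℕ × ℕ => ((k.1 : ℝ) + 1) • (x i - S i k)) ∈ goodSub hL := by
    intro i
    have := maj_good hL (x i) B (hx i) 1 1 zero_le_one _
      fun k : ℕ × ℕ => scaledSin_diff_maj k.1 k.2
    simpa only [map_smul, map_sub, Polynomial.aeval_X] using this
  have hSP : ∀ R : MvPolynomial (Fin n) ℝ, aeval S R ∈ goodSub hL := by
    intro R
    induction R using MvPolynomial.induction_on with
    | C a => rw [MvPolynomial.algHom_C]; exact (goodSub hL).algebraMap_mem a
    | add p q hp hq => rw [map_add]; exact add_mem hp hq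
    | mul_X p i hp => rw [map_mul, aeval_X]; exact mul_mem hp (hS i)
  have partB : ∀ R : MvPolynomial (Fin n) ℝ,
      (fun k : ℕ × ℕ => ((k.1 : ℝ) + 1) • (aeval x R - aeval S R k)) ∈ goodSub hL := by
    intro R
    induction R using MvPolynomial.induction_on with
    | C a =>
      convert zero_mem (goodSub (ι := ℕ × ℕ) hL) using 1
      funext k
      simp
    | add p q hp hq =>
      convert add_mem hp hq using 1
      funext k
      simp only [map_add, Pi.add_apply, ← smul_add]
      congr 1; ring
    | mul_X p i hp =>
      convert add_mem (mul_mem hp (const_mem_goodSub hL (x i))) (mul_mem (hSP p) (hSd i)) using 1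
      funext k
      simp only [map_mul, aeval_X, Pi.add_apply, Pi.mul_apply, Algebra.smul_def]
      ring
  obtain ⟨D, hD⟩ := goodSub_bound hL (partB P)
  refine le_of_forall_pos_le_add fun ε hε => ?_
  obtain ⟨N, hN⟩ := exists_nat_gt (D / (ε / 2))
  obtain ⟨K, hK⟩ := partA N (ε / 2) (by positivity)
  have h2 := (abs_le.1 (hD (N, K))).1
  simp only [map_smul, smul_eq_mul, aeval_pi, map_sub] at h2
  have hN0 : (0 : ℝ) < (N : ℝ) + 1 := by positivity
  rw [div_lt_iff₀ (by positivity)] at hN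
  simp only [S] at h2
  by_contra hcon
  push Not at hcon
  have h3 : L (aeval x P) - L (aeval (fun i => Polynomial.aeval (x i) (scaledSin N K)) P)
      < -(ε / 2) := by linarith
  nlinarith

end


lemma final_pos {n m : ℕ} (g : Fin m → MvPolynomial (Fin n) ℝ) (f : MvPolynomial (Fin n) ℝ)
    (L : MvPolynomial (Fin n) ℝ →ₗ[ℝ] ℝ) (hL : PosFun L) (hL1 : L 1 = 1)
    (hg : ∀ j, L (g j ^ 2) ≤ 0) (B : ℝ)
    (hx : ∀ i, ∀ k : ℕ, L ((X i : MvPolynomial (Fin n) ℝ) ^ (2 * k)) ≤ B * (k.factorial : ℝ))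
    (fstar : ℝ) (hmin : ∀ x : Fin n → ℝ, (∀ j, eval x (g j) = 0) → fstar ≤ eval x f) :
    fstar ≤ L f := by
  set F : MvPolynomial (Fin n) ℝ := f - C fstar with hF
  set H : MvPolynomial (Fin n) ℝ := 1 + F ^ 2 + ∑ i, X i ^ 2 with hH
  set G : MvPolynomial (Fin n) ℝ := ∑ j, g j ^ 2 with hG
  have hLG : L G ≤ 0 := by
    rw [hG, map_sum]; exact Finset.sum_nonpos fun j _ => hg j
  have hLF : L F = L f - fstar := by
    have : C fstar = fstar • (1 : MvPolynomial (Fin n) ℝ) := by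
      rw [MvPolynomial.smul_eq_C_mul, mul_one]
    rw [hF, map_sub, this, map_smul, hL1, smul_eq_mul, mul_one]
  have key : ∀ δ > 0, 0 ≤ L F + δ * L H := by
    intro δ hδ
    have evH : ∀ z, eval z H = 1 + (eval z F) ^ 2 + ∑ i, z i ^ 2 := by
      intro z; simp [hH]
    have evG : ∀ z, eval z G = ∑ j, (eval z (g j)) ^ 2 := by
      intro z; simp [hG]
    have hG0 : ∀ z, 0 ≤ eval z G := by
      intro z; rw [evG]; positivity
    set W : MvPolynomial (Fin n) ℝ := F + C δ * H with hW
    have evW : ∀ z, eval z W = eval z F + δ * (1 + (eval z F) ^ 2 + ∑ i, z i ^ 2) := by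
      intro z; simp [hW, evH]
    have hout : ∀ z : Fin n → ℝ, 1 / (2 * δ) < ‖z‖ → 0 ≤ eval z W := by
      intro z hz
      have h1 : ∃ i, 1 / (2 * δ) < |z i| := by
        by_contra hcon
        push Not at hcon
        have := (pi_norm_le_iff_of_nonneg (x := z) (r := 1 / (2 * δ)) (by positivity)).2 hcon
        linarith
      obtain ⟨i, hi⟩ := h1
      have h2 : (1 / (2 * δ)) ^ 2 ≤ z i ^ 2 := by
        rw [← sq_abs (z i)]
        gcongr
      have h3 : z i ^ 2 ≤ ∑ i, z i ^ 2 :=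
        Finset.single_le_sum (f := fun i => z i ^ 2) (fun _ _ => sq_nonneg _) (Finset.mem_univ i)
      have h4 : 0 ≤ δ * (eval z F + 1 / (2 * δ)) ^ 2 := by positivity
      have h5 : δ * (eval z F + 1 / (2 * δ)) ^ 2
          = eval z F + δ * (eval z F) ^ 2 + δ * (1 / (2 * δ)) ^ 2 := by
        field_simp; ring
      have h6 : δ * (1 / (2 * δ)) ^ 2 ≤ δ * ∑ i, z i ^ 2 :=
        mul_le_mul_of_nonneg_left (h2.trans h3) hδ.le
      rw [evW]
      nlinarith
    have hcomp : ∃ N : ℕ, Metric.closedBall (0 : Fin n → ℝ) (1 / (2 * δ)) ⊆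
        {z | 0 < eval z W + N * eval z G} := by
      refine (isCompact_closedBall (0 : Fin n → ℝ) (1 / (2 * δ))).elim_directed_cover
        (fun N : ℕ => {z | 0 < eval z W + N * eval z G}) ?_ ?_ ?_
      · intro N
        refine isOpen_lt continuous_const ?_
        exact (MvPolynomial.continuous_eval W).add
          (continuous_const.mul (MvPolynomial.continuous_eval G))
      · intro z _
        rw [Set.mem_iUnion]
        rcases (hG0 z).eq_or_lt with h | h
        · refine ⟨0, ?_⟩
          have hz : ∀ j, eval z (g j) = 0 := by
            intro j
            rw [evG, eq_comm, Finset.sum_eq_zero_iff_of_nonneg (fun _ _ => sq_nonneg _)] at h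
            exact pow_eq_zero_iff (two_ne_zero) |>.1 (h j (Finset.mem_univ j))
          have hFz : 0 ≤ eval z F := by
            have := hmin z hz
            simp only [hF, map_sub, eval_C]; linarith
          have : 0 < eval z W := by
            rw [evW]
            positivity
          simpa using this
        · obtain ⟨N, hN⟩ := exists_nat_gt (-(eval z W) / eval z G)
          refine ⟨N, ?_⟩
          rw [div_lt_iff₀ h] at hN
          simp only [Set.mem_ofPred_eq]
          linarith
      · refine Monotone.directed_le ?_
        intro a b hab z hz
        simp only [Set.mem_ofPred_eq] at hz ⊢
        have : (a : ℝ) * eval z G ≤ b * eval z G :=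
          mul_le_mul_of_nonneg_right (by exact_mod_cast hab) (hG0 z)
        linarith
    obtain ⟨N, hN⟩ := hcomp
    have hP := core_pos hL (fun i => X i) B hx (W + C (N : ℝ) * G) (by
      intro z
      rw [map_add, map_mul, eval_C]
      by_cases hz : ‖z‖ ≤ 1 / (2 * δ)
      · have := hN (show z ∈ Metric.closedBall (0 : Fin n → ℝ) (1 / (2 * δ)) by simpa using hz)
        exact le_of_lt this
      · have h1 := hout z (not_le.1 hz)
        have := hG0 z
        positivity)
    have hX : aeval (fun i => (X i : MvPolynomial (Fin n) ℝ)) (W + C (N : ℝ) * G)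
        = W + C (N : ℝ) * G := MvPolynomial.aeval_X_left_apply _
    rw [hX, hW, ← MvPolynomial.smul_eq_C_mul, ← MvPolynomial.smul_eq_C_mul, map_add, map_add,
      map_smul, map_smul, smul_eq_mul, smul_eq_mul] at hP
    have : (N : ℝ) * L G ≤ 0 := mul_nonpos_of_nonneg_of_nonpos (by positivity) hLG
    linarith
  have hfin : 0 ≤ L F := by
    by_contra hcon
    push Not at hcon
    have h1 := key (-(L F) / (2 * (|L H| + 1))) (div_pos (by linarith) (by positivity))
    have h2 : -(L F) / (2 * (|L H| + 1)) * L H ≤ -(L F) / (2 * (|L H| + 1)) * (|L H| + 1) := by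
      refine mul_le_mul_of_nonneg_left ?_ (div_nonneg (by linarith) (by positivity))
      linarith [le_abs_self (L H)]
    have h3 : -(L F) / (2 * (|L H| + 1)) * (|L H| + 1) = -(L F) / 2 := by
      field_simp
    linarith
  linarith

/-- `Ly` as a linear map -/
noncomputable def LyL {n : ℕ} (y : (Fin n →₀ ℕ) → ℝ) : MvPolynomial (Fin n) ℝ →ₗ[ℝ] ℝ :=
  (basisMonomials (Fin n) ℝ).constr ℝ y

lemma LyL_monomial {n : ℕ} (y : (Fin n →₀ ℕ) → ℝ) (α : Fin n →₀ ℕ) (c : ℝ) :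
    LyL y (monomial α c) = c * y α := by
  have h : monomial α c = c • basisMonomials (Fin n) ℝ α := by
    rw [coe_basisMonomials, smul_monomial, smul_eq_mul, mul_one]
  rw [h, map_smul, LyL, Module.Basis.constr_basis, smul_eq_mul]

lemma Ly_eq {n : ℕ} (y : (Fin n →₀ ℕ) → ℝ) (p : MvPolynomial (Fin n) ℝ) : Ly y p = LyL y p := by
  conv_rhs => rw [← support_sum_monomial_coeff p]
  rw [map_sum, Ly]
  exact Finset.sum_congr rfl fun α _ => (LyL_monomial y α _).symm

lemma LyL_one {n : ℕ} (y : (Fin n →₀ ℕ) → ℝ) : LyL y 1 = y 0 := by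
  have := LyL_monomial y 0 1
  rwa [one_mul] at this

lemma mem_degLE {n r : ℕ} (α : Fin n →₀ ℕ) : α ∈ degLE n r ↔ (α.sum fun _ e => e) ≤ r := by
  rw [degLE, Finset.mem_filter]
  refine ⟨fun h => h.2, fun h => ⟨?_, h⟩⟩
  rw [Finset.mem_Iic]
  intro i
  show α i ≤ r
  by_cases hi : i ∈ α.support
  · exact (Finset.single_le_sum (f := fun i => α i) (fun _ _ => Nat.zero_le _) hi).trans h
  · rw [Finsupp.notMem_support_iff.1 hi]; exact Nat.zero_le _

lemma psd_sq {n r : ℕ} {y : (Fin n →₀ ℕ) → ℝ} (hy : (momentMatrix n r y).PosSemidef)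
    (q : MvPolynomial (Fin n) ℝ) (hq : q.totalDegree ≤ r) : 0 ≤ LyL y (q * q) := by
  have h := hy.dotProduct_mulVec_nonneg (fun α => coeff α.1 q)
  have e : q = ∑ α : ↥(degLE n r), monomial α.1 (coeff α.1 q) := by
    conv_lhs => rw [← support_sum_monomial_coeff q]
    rw [Finset.sum_coe_sort (degLE n r) (fun α => monomial α (coeff α q))]
    refine Finset.sum_subset ?_ ?_
    · intro α hα
      rw [mem_degLE]
      exact (le_totalDegree hα).trans hq
    · intro α _ hα
      rw [notMem_support_iff.1 hα, map_zero]
  have e2 : q * q = ∑ α : ↥(degLE n r), ∑ β : ↥(degLE n r),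
      monomial (α.1 + β.1) (coeff α.1 q * coeff β.1 q) := by
    conv_lhs => rw [e]
    rw [Finset.sum_mul_sum]
    refine Finset.sum_congr rfl fun α _ => Finset.sum_congr rfl fun β _ => ?_
    rw [monomial_mul]
  rw [e2]
  simp only [map_sum, LyL_monomial]
  refine le_of_le_of_eq h ?_
  simp only [dotProduct, Matrix.mulVec, Finset.mul_sum, momentMatrix, Pi.star_apply, star_trivial]
  refine Finset.sum_congr rfl fun α _ => Finset.sum_congr rfl fun β _ => ?_
  ring

lemma psd_sos {n : ℕ} {p : MvPolynomial (Fin n) ℝ} (hp : IsSumSq p) :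
    ∃ r₀ : ℕ, ∀ r ≥ r₀, ∀ y : (Fin n →₀ ℕ) → ℝ, (momentMatrix n r y).PosSemidef →
      0 ≤ LyL y p := by
  induction hp with
  | zero => exact ⟨0, fun r _ y _ => by simp⟩
  | sq_add a _ ih =>
    obtain ⟨r₀, h⟩ := ih
    refine ⟨max r₀ a.totalDegree, fun r hr y hy => ?_⟩
    rw [map_add]
    exact add_nonneg (psd_sq hy a ((le_max_right _ _).trans hr))
      (h r ((le_max_left _ _).trans hr) y hy)

lemma theta_eq (n K : ℕ) : theta n K = ∑ p ∈ Finset.range (K + 1) ×ˢ (Finset.univ : Finset (Fin n)),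
    C ((1 : ℝ) / (Nat.factorial p.1 : ℝ)) * X p.2 ^ (2 * p.1) := by
  rw [theta, Finset.sum_product]

lemma theta_term_sos {n : ℕ} (p : ℕ × Fin n) :
    IsSumSq (C ((1 : ℝ) / (Nat.factorial p.1 : ℝ)) * (X p.2 : MvPolynomial (Fin n) ℝ) ^ (2 * p.1)) :=
  IsSumSq.mul (isSumSq_algebraMap (A := MvPolynomial (Fin n) ℝ) (by positivity))
    (isSumSq_pow_two_mul _ _)

lemma isSumSq_finset_sum {A ι : Type*} [CommRing A] (s : Finset ι) (f : ι → A)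
    (h : ∀ i ∈ s, IsSumSq (f i)) : IsSumSq (∑ i ∈ s, f i) := by
  classical
  induction s using Finset.induction_on with
  | empty => simp
  | insert a s ha ih =>
    rw [Finset.sum_insert ha]
    exact (h a (Finset.mem_insert_self _ _)).add
      (ih fun i hi => h i (Finset.mem_insert_of_mem hi))

lemma theta_sos (n K : ℕ) : IsSumSq (theta n K) := by
  rw [theta_eq]; exact isSumSq_finset_sum _ _ fun p _ => theta_term_sos p

lemma theta_mono (n : ℕ) {K K' : ℕ} (h : K ≤ K') : IsSumSq (theta n K' - theta n K) := by
  classical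
  rw [theta_eq, theta_eq, ← Finset.sum_sdiff (Finset.product_subset_product_left
    (Finset.range_subset_range.2 (Nat.succ_le_succ h))), add_sub_cancel_right]
  exact isSumSq_finset_sum _ _ fun p _ => theta_term_sos p

lemma theta_term (n K : ℕ) (i : Fin n) :
    IsSumSq (theta n K - C ((1 : ℝ) / (Nat.factorial K : ℝ)) * X i ^ (2 * K)) := by
  classical
  have hm : ((K, i) : ℕ × Fin n) ∈ Finset.range (K + 1) ×ˢ (Finset.univ : Finset (Fin n)) := by
    simp
  rw [theta_eq, ← Finset.add_sum_erase _ _ hm, add_sub_cancel_left]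
  exact isSumSq_finset_sum _ _ fun p _ => theta_term_sos p

/-- domination by a multiple of `1 + θ_K` modulo sums of squares -/
def Dom {n : ℕ} (a : MvPolynomial (Fin n) ℝ) : Prop :=
  ∃ c : ℝ, 0 ≤ c ∧ ∃ K : ℕ, IsSumSq (C c * (1 + theta n K) - a)

lemma isSumSq_C {n : ℕ} {c : ℝ} (hc : 0 ≤ c) : IsSumSq (C c : MvPolynomial (Fin n) ℝ) :=
  isSumSq_algebraMap (A := MvPolynomial (Fin n) ℝ) hc

lemma Dom.add {n : ℕ} {a b : MvPolynomial (Fin n) ℝ} (ha : Dom a) (hb : Dom b) :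
    Dom (a + b) := by
  obtain ⟨c, hc, K, h⟩ := ha
  obtain ⟨c', hc', K', h'⟩ := hb
  refine ⟨c + c', add_nonneg hc hc', max K K', ?_⟩
  have e : C (c + c') * (1 + theta n (max K K')) - (a + b) =
      (C c * (1 + theta n K) - a) + (C c' * (1 + theta n K') - b) +
      C c * (theta n (max K K') - theta n K) + C c' * (theta n (max K K') - theta n K') := by
    rw [C_add]; ring
  rw [e]
  exact ((h.add h').add ((isSumSq_C hc).mul (theta_mono n (le_max_left _ _)))).add
    ((isSumSq_C hc').mul (theta_mono n (le_max_right _ _)))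

lemma Dom.smul {n : ℕ} {a : MvPolynomial (Fin n) ℝ} (ha : Dom a) {t : ℝ} (ht : 0 ≤ t) :
    Dom (C t * a) := by
  obtain ⟨c, hc, K, h⟩ := ha
  refine ⟨t * c, mul_nonneg ht hc, K, ?_⟩
  have e : C (t * c) * (1 + theta n K) - C t * a = C t * (C c * (1 + theta n K) - a) := by
    rw [C_mul]; ring
  rw [e]
  exact (isSumSq_C ht).mul h

lemma Dom.mono {n : ℕ} {a b : MvPolynomial (Fin n) ℝ} (hb : Dom b) (h : IsSumSq (b - a)) :
    Dom a := by
  obtain ⟨c, hc, K, h'⟩ := hb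
  refine ⟨c, hc, K, ?_⟩
  have := h'.add h
  simpa using this

lemma dom_X {n : ℕ} (i : Fin n) (k : ℕ) : Dom ((X i : MvPolynomial (Fin n) ℝ) ^ (2 * k)) := by
  have hk : (0 : ℝ) ≤ (k.factorial : ℝ) := by positivity
  refine ⟨k.factorial, hk, k, ?_⟩
  have e1 : (C (k.factorial : ℝ) : MvPolynomial (Fin n) ℝ) * C ((1 : ℝ) / (Nat.factorial k : ℝ)) = 1 := by
    rw [← C_mul, mul_one_div_cancel (by positivity), C_1]
  have e : C (k.factorial : ℝ) * (1 + theta n k) - X i ^ (2 * k) =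
      C (k.factorial : ℝ) + C (k.factorial : ℝ) *
        (theta n k - C ((1 : ℝ) / (Nat.factorial k : ℝ)) * X i ^ (2 * k)) := by
    linear_combination (X i ^ (2 * k)) * e1
  rw [e]
  exact (isSumSq_C hk).add ((isSumSq_C hk).mul (theta_term n k i))

lemma dom_pow {n : ℕ} (q : MvPolynomial (Fin n) ℝ) : ∀ m : ℕ, Dom (q ^ (2 * m)) := by
  induction q using MvPolynomial.induction_on with
  | C a =>
    intro m
    have h0 : 0 ≤ a ^ (2 * m) := by rw [pow_mul]; positivity
    refine ⟨a ^ (2 * m), h0, 0, ?_⟩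
    have e : C (a ^ (2 * m)) * (1 + theta n 0) - C a ^ (2 * m) = C (a ^ (2 * m)) * theta n 0 := by
      rw [C_pow]; ring
    rw [e]
    exact (isSumSq_C h0).mul (theta_sos n 0)
  | add p q hp hq =>
    intro m
    refine (((hp m).add (hq m)).smul (t := 4 ^ m) (by positivity)).mono ?_
    have : (C ((4 : ℝ) ^ m) : MvPolynomial (Fin n) ℝ) = 4 ^ m := by
      rw [C_pow]; rfl
    rw [this]
    exact isSumSq_add_pow p q m
  | mul_X p i hp =>
    intro m
    refine (((hp (2 * m)).add (dom_X i (2 * m))).smul (t := 1 / 2) (by norm_num)).mono ?_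
    have e2 : (2 : MvPolynomial (Fin n) ℝ) * C (1 / 2 : ℝ) = 1 := by
      rw [← map_ofNat C 2, ← C_mul]; norm_num
    have e : C (1 / 2 : ℝ) * (p ^ (2 * (2 * m)) + X i ^ (2 * (2 * m))) - (p * X i) ^ (2 * m)
        = C (1 / 2 : ℝ) * ((p ^ (2 * m) - X i ^ (2 * m)) * (p ^ (2 * m) - X i ^ (2 * m))) := by
      have a1 : p ^ (2 * (2 * m)) = p ^ (2 * m) * p ^ (2 * m) := by ring
      have a2 : (X i : MvPolynomial (Fin n) ℝ) ^ (2 * (2 * m)) = X i ^ (2 * m) * X i ^ (2 * m) := by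
        ring
      rw [a1, a2, mul_pow]
      linear_combination (p ^ (2 * m) * X i ^ (2 * m)) * e2
    rw [e]
    exact (isSumSq_C (by norm_num)).mul (IsSumSq.mul_self _)


lemma LyL_theta {n : ℕ} (y : (Fin n →₀ ℕ) → ℝ) (K : ℕ) :
    LyL y (theta n K) = ∑ p ∈ Finset.range (K + 1) ×ˢ (Finset.univ : Finset (Fin n)),
      (1 / (Nat.factorial p.1 : ℝ)) * LyL y (X p.2 ^ (2 * p.1)) := by
  rw [theta_eq, map_sum]
  refine Finset.sum_congr rfl fun p _ => ?_
  rw [← MvPolynomial.smul_eq_C_mul, map_smul, smul_eq_mul]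

lemma LyL_X_nonneg {n r : ℕ} {y : (Fin n →₀ ℕ) → ℝ} (hy : (momentMatrix n r y).PosSemidef)
    (i : Fin n) {k : ℕ} (hk : k ≤ r) : 0 ≤ LyL y (X i ^ (2 * k)) := by
  have e : (X i : MvPolynomial (Fin n) ℝ) ^ (2 * k) = X i ^ k * X i ^ k := by ring
  rw [e]
  exact psd_sq hy _ ((totalDegree_X_pow i k).le.trans hk)

lemma LyL_theta_mono {n r : ℕ} {y : (Fin n →₀ ℕ) → ℝ} (hy : (momentMatrix n r y).PosSemidef)
    {K : ℕ} (hK : K ≤ r) : LyL y (theta n K) ≤ LyL y (theta n r) := by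
  rw [LyL_theta, LyL_theta]
  refine Finset.sum_le_sum_of_subset_of_nonneg (Finset.product_subset_product_left
    (Finset.range_subset_range.2 (Nat.succ_le_succ hK))) ?_
  intro p hp _
  have : p.1 ≤ r := by
    have := (Finset.mem_product.1 hp).1
    rw [Finset.mem_range] at this; omega
  exact mul_nonneg (by positivity) (LyL_X_nonneg hy _ this)

lemma LyL_X_le {n r : ℕ} {y : (Fin n →₀ ℕ) → ℝ} (hy : (momentMatrix n r y).PosSemidef)
    (i : Fin n) {k : ℕ} (hk : k ≤ r) :
    LyL y (X i ^ (2 * k)) ≤ LyL y (theta n r) * (k.factorial : ℝ) := by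
  have h : (1 / (Nat.factorial k : ℝ)) * LyL y (X i ^ (2 * k)) ≤ LyL y (theta n r) := by
    rw [LyL_theta]
    refine Finset.single_le_sum (f := fun p : ℕ × Fin n =>
      (1 / (Nat.factorial p.1 : ℝ)) * LyL y (X p.2 ^ (2 * p.1))) (a := (k, i)) ?_ ?_
    · intro p hp
      have : p.1 ≤ r := by
        have := (Finset.mem_product.1 hp).1
        rw [Finset.mem_range] at this; omega
      exact mul_nonneg (by positivity) (LyL_X_nonneg hy _ this)
    · simp; omega
  have hk0 : (0 : ℝ) < (k.factorial : ℝ) := by positivity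
  rw [one_div, inv_mul_le_iff₀ hk0] at h
  linarith

lemma LyL_theta_ge {n r : ℕ} {y : (Fin n →₀ ℕ) → ℝ} (hy : (momentMatrix n r y).PosSemidef)
    (h1 : y 0 = 1) : (n : ℝ) ≤ LyL y (theta n r) := by
  refine le_trans ?_ (LyL_theta_mono hy (Nat.zero_le r))
  have : theta n 0 = (n : ℝ) • 1 := by
    simp [theta, MvPolynomial.smul_eq_C_mul]
  rw [this, map_smul, LyL_one, h1, smul_eq_mul, mul_one]

/-- feasible points -/
def Feas (n m : ℕ) (g : Fin m → MvPolynomial (Fin n) ℝ) (r : ℕ) (y : (Fin n →₀ ℕ) → ℝ) : Prop :=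
  y 0 = 1 ∧ (momentMatrix n r y).PosSemidef ∧ (∀ j, Ly y ((g j) ^ 2) ≤ 0)

lemma LyL_C {n : ℕ} {y : (Fin n →₀ ℕ) → ℝ} (h1 : y 0 = 1) (c : ℝ) : LyL y (C c) = c := by
  have : (C c : MvPolynomial (Fin n) ℝ) = c • 1 := by
    rw [MvPolynomial.smul_eq_C_mul, mul_one]
  rw [this, map_smul, LyL_one, h1, smul_eq_mul, mul_one]

lemma sq_control {n : ℕ} (p : MvPolynomial (Fin n) ℝ) : ∃ c : ℝ, 0 ≤ c ∧ ∃ r₀ : ℕ, ∀ r ≥ r₀,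
    ∀ y : (Fin n →₀ ℕ) → ℝ, y 0 = 1 → (momentMatrix n r y).PosSemidef →
      LyL y (p * p) ≤ c * (1 + LyL y (theta n r)) := by
  obtain ⟨c, hc, K, h⟩ := dom_pow p 1
  obtain ⟨r₀, hr₀⟩ := psd_sos h
  refine ⟨c, hc, max r₀ K, fun r hr y h1 hy => ?_⟩
  have h2 := hr₀ r ((le_max_left _ _).trans hr) y hy
  rw [map_sub, ← MvPolynomial.smul_eq_C_mul, map_smul, map_add, LyL_one, h1, smul_eq_mul,
    mul_one, pow_two] at h2
  have h3 := LyL_theta_mono hy ((le_max_right _ _).trans hr)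
  have h4 : c * (1 + LyL y (theta n K)) ≤ c * (1 + LyL y (theta n r)) := by gcongr
  linarith

lemma theta_bound {n : ℕ} (f : MvPolynomial (Fin n) ℝ) (fstar ε : ℝ) (hε : 0 < ε) :
    ∃ B : ℝ, ∃ r₀ : ℕ, ∀ r ≥ r₀, ∀ y : (Fin n →₀ ℕ) → ℝ, y 0 = 1 →
      (momentMatrix n r y).PosSemidef → LyL y (f + C ε * theta n r) < fstar →
      LyL y (theta n r) ≤ B := by
  obtain ⟨c, hc, r₁, h₁⟩ := sq_control f
  set δ : ℝ := ε / (2 * (c + 1)) with hδ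
  have hδ0 : 0 < δ := by positivity
  refine ⟨(2 / ε) * (fstar + ε / 2 + 1 / (4 * δ)),
    max r₁ (f + C (1 / (2 * δ))).totalDegree, fun r hr y h1 hy hlt => ?_⟩
  have h2 := h₁ r ((le_max_left _ _).trans hr) y h1 hy
  have h3 := psd_sq hy _ ((le_max_right _ _).trans hr)
  have e : (f + C (1 / (2 * δ))) * (f + C (1 / (2 * δ)))
      = f * f + (1 / δ) • f + C ((1 / (2 * δ)) * (1 / (2 * δ))) := by
    rw [MvPolynomial.smul_eq_C_mul, C_mul]
    have : (C (1 / δ) : MvPolynomial (Fin n) ℝ) = 2 * C (1 / (2 * δ)) := by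
      rw [← map_ofNat C 2, ← C_mul]; congr 1; field_simp
    rw [this]; ring
  rw [e, map_add, map_add, map_smul, LyL_C h1, smul_eq_mul] at h3
  rw [map_add, ← MvPolynomial.smul_eq_C_mul, map_smul, smul_eq_mul] at hlt
  have hT : (n : ℝ) ≤ LyL y (theta n r) := LyL_theta_ge hy h1
  have hT0 : 0 ≤ LyL y (theta n r) := le_trans (by positivity) hT
  generalize LyL y (theta n r) = T at *
  have h4 : 0 ≤ δ * LyL y (f * f) + LyL y f + 1 / (4 * δ) := by
    have := mul_nonneg hδ0.le h3
    have e2 : δ * (LyL y (f * f) + 1 / δ * LyL y f + 1 / (2 * δ) * (1 / (2 * δ)))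
      = δ * LyL y (f * f) + LyL y f + 1 / (4 * δ) := by field_simp; ring
    rwa [e2] at this
  have h5 : δ * LyL y (f * f) ≤ δ * (c * (1 + T)) := by gcongr
  have h6 : δ * (c * (1 + T)) ≤ (ε / 2) * (1 + T) := by
    rw [← mul_assoc]
    refine mul_le_mul_of_nonneg_right ?_ (by linarith)
    have : δ * (c + 1) = ε / 2 := by rw [hδ]; field_simp
    nlinarith
  have h7 : (ε / 2) * T ≤ fstar + ε / 2 + 1 / (4 * δ) := by linarith
  calc T = (2 / ε) * ((ε / 2) * T) := by field_simp
    _ ≤ _ := by gcongr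

lemma lower_bound (n m : ℕ) (hn : 0 < n)
    (g : Fin m → MvPolynomial (Fin n) ℝ) (f : MvPolynomial (Fin n) ℝ) (fstar : ℝ)
    (hmin : ∀ x : Fin n → ℝ, (∀ j, eval x (g j) = 0) → fstar ≤ eval x f)
    (ε : ℝ) (hε : 0 < ε) :
    ∃ r₀ : ℕ, ∀ r ≥ r₀, ∀ y, Feas n m g r y → fstar ≤ LyL y (f + C ε * theta n r) := by
  by_contra hcon
  push Not at hcon
  have hfreq : ∃ᶠ r in atTop, r ∈ {r | ∃ y, Feas n m g r y ∧
      LyL y (f + C ε * theta n r) < fstar} := by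
    rw [Filter.frequently_atTop]
    intro a
    obtain ⟨r, hr, y, h⟩ := hcon a
    exact ⟨r, hr, y, h⟩
  set bad : Set ℕ := {r | ∃ y, Feas n m g r y ∧ LyL y (f + C ε * theta n r) < fstar} with hbad
  have hex : ∀ r, ∃ y, r ∈ bad → Feas n m g r y ∧ LyL y (f + C ε * theta n r) < fstar := by
    intro r
    by_cases h : r ∈ bad
    · obtain ⟨y, hy⟩ := h; exact ⟨y, fun _ => hy⟩
    · exact ⟨0, fun h' => absurd h' h⟩
  choose y hy using hex
  haveI hne : (atTop ⊓ 𝓟 bad).NeBot := Filter.frequently_mem_iff_neBot.1 hfreq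
  let U : Ultrafilter ℕ := Ultrafilter.of (atTop ⊓ 𝓟 bad)
  have hU : (U : Filter ℕ) ≤ atTop ⊓ 𝓟 bad := Ultrafilter.of_le _
  have hUb : ∀ᶠ r in (U : Filter ℕ), r ∈ bad :=
    (hU.trans inf_le_right) (mem_principal_self bad)
  have hUt : ∀ a, ∀ᶠ r in (U : Filter ℕ), a ≤ r := fun a =>
    (hU.trans inf_le_left) (eventually_ge_atTop a)
  obtain ⟨B, rB, hB⟩ := theta_bound f fstar ε hε
  have evB : ∀ᶠ r in (U : Filter ℕ), LyL (y r) (theta n r) ≤ B := by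
    filter_upwards [hUb, hUt rB] with r h1 h2
    obtain ⟨hf, hlt⟩ := hy r h1
    exact hB r h2 _ hf.1 hf.2.1 hlt
  have hlim : ∀ p : MvPolynomial (Fin n) ℝ, ∃ l, Tendsto (fun r => LyL (y r) p) U (𝓝 l) := by
    intro p
    obtain ⟨c, hc, r₁, h₁⟩ := sq_control p
    have hev : ∀ᶠ r in (U : Filter ℕ), LyL (y r) p ∈
        Set.Icc (-(1 + c * (1 + B))) (1 + c * (1 + B)) := by
      filter_upwards [hUb, hUt (max r₁ (max (1 + p).totalDegree (1 - p).totalDegree)), evB]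
        with r h1 h2 h3
      obtain ⟨hf, hlt⟩ := hy r h1
      have a1 := h₁ r ((le_max_left _ _).trans h2) _ hf.1 hf.2.1
      have a2 : c * (1 + LyL (y r) (theta n r)) ≤ c * (1 + B) := by gcongr
      have a3 := psd_sq hf.2.1 (1 + p)
        ((le_max_left _ _).trans ((le_max_right _ _).trans h2))
      have a4 := psd_sq hf.2.1 (1 - p)
        ((le_max_right _ _).trans ((le_max_right _ _).trans h2))
      have a5 := psd_sq hf.2.1 1 (by simp)
      have e3 : (1 + p) * (1 + p) = 1 + p + p + p * p := by ring
      have e4 : (1 - p) * (1 - p) = 1 - p - p + p * p := by ring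
      have a6 : 0 ≤ LyL (y r) (p * p) := by
        have hd : p.totalDegree ≤ r := by
          have : p.totalDegree ≤ max (1 + p).totalDegree 0 := by
            have h := totalDegree_add ((1 : MvPolynomial (Fin n) ℝ) + p) (-1)
            have e : (1 : MvPolynomial (Fin n) ℝ) + p + -1 = p := by ring
            rw [e, totalDegree_neg, totalDegree_one] at h
            exact h
          refine this.trans (max_le ?_ (Nat.zero_le _))
          exact (le_max_left _ _).trans ((le_max_right _ _).trans h2)
        exact psd_sq hf.2.1 p hd
      rw [e3] at a3
      rw [e4] at a4
      simp only [map_add, map_sub, LyL_one, hf.1] at a3 a4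
      constructor <;> linarith
    have := isCompact_Icc.ultrafilter_le_nhds (U.map fun r => LyL (y r) p)
      (by rw [le_principal_iff]; exact hev)
    obtain ⟨l, _, hl⟩ := this
    exact ⟨l, hl⟩
  choose l hl using hlim
  let L : MvPolynomial (Fin n) ℝ →ₗ[ℝ] ℝ :=
    { toFun := l
      map_add' := fun p q => tendsto_nhds_unique (hl (p + q)) (by
        simpa only [map_add] using (hl p).add (hl q))
      map_smul' := fun c p => tendsto_nhds_unique (hl (c • p)) (by
        simpa only [map_smul, RingHom.id_apply] using (hl p).const_smul c) }
  have hLt : ∀ p, Tendsto (fun r => LyL (y r) p) U (𝓝 (L p)) := hl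
  have hpos : PosFun L := by
    intro a
    refine ge_of_tendsto (hLt (a * a)) ?_
    filter_upwards [hUb, hUt a.totalDegree] with r h1 h2
    exact psd_sq (hy r h1).1.2.1 a h2
  have hL1 : L 1 = 1 := by
    refine tendsto_nhds_unique (hLt 1) (tendsto_const_nhds.congr' ?_)
    filter_upwards [hUb] with r h1
    rw [LyL_one, (hy r h1).1.1]
  have hLg : ∀ j, L (g j ^ 2) ≤ 0 := by
    intro j
    refine le_of_tendsto (hLt _) ?_
    filter_upwards [hUb] with r h1
    rw [← Ly_eq]
    exact (hy r h1).1.2.2 j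
  have hLx : ∀ i, ∀ k : ℕ, L ((X i : MvPolynomial (Fin n) ℝ) ^ (2 * k))
      ≤ B * (k.factorial : ℝ) := by
    intro i k
    refine le_of_tendsto (hLt _) ?_
    filter_upwards [hUb, hUt k, evB] with r h1 h2 h3
    refine (LyL_X_le (hy r h1).1.2.1 i h2).trans ?_
    gcongr
  have hLf : L f ≤ fstar - ε * n := by
    refine le_of_tendsto (hLt _) ?_
    filter_upwards [hUb] with r h1
    obtain ⟨hf, hlt⟩ := hy r h1
    have := LyL_theta_ge hf.2.1 hf.1
    rw [map_add, ← MvPolynomial.smul_eq_C_mul, map_smul, smul_eq_mul] at hlt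
    have h2 : ε * n ≤ ε * LyL (y r) (theta n r) := by gcongr
    linarith
  have hfin := final_pos g f L hpos hL1 hLg B hLx fstar hmin
  have : 0 < ε * n := by positivity
  linarith

/-- moments of the Dirac measure -/
noncomputable def diracY {n : ℕ} (x : Fin n → ℝ) : (Fin n →₀ ℕ) → ℝ :=
  fun α => ∏ i, x i ^ α i

lemma Ly_dirac {n : ℕ} (x : Fin n → ℝ) (p : MvPolynomial (Fin n) ℝ) :
    Ly (diracY x) p = eval x p := by
  rw [Ly, eval_eq']; rfl

lemma dirac_psd {n : ℕ} (x : Fin n → ℝ) (r : ℕ) : (momentMatrix n r (diracY x)).PosSemidef := by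
  have : momentMatrix n r (diracY x) = Matrix.vecMulVec (fun α : ↥(degLE n r) => diracY x α.1)
      (star fun α : ↥(degLE n r) => diracY x α.1) := by
    ext α β
    simp [momentMatrix, Matrix.vecMulVec_apply, diracY, pow_add, Finset.prod_mul_distrib]
  rw [this]
  exact Matrix.posSemidef_vecMulVec_self_star _

lemma theta_eval_le {n : ℕ} (x : Fin n → ℝ) (ρ : ℝ) (hρ : ‖x‖ ≤ ρ) (r : ℕ) :
    eval x (theta n r) ≤ n * Real.exp (ρ ^ 2) := by
  have e : eval x (theta n r) = ∑ i : Fin n, ∑ k ∈ Finset.range (r + 1),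
      (x i ^ 2) ^ k / (k.factorial : ℝ) := by
    rw [theta, Finset.sum_comm]
    simp only [map_sum, map_mul, map_pow, eval_C, eval_X]
    refine Finset.sum_congr rfl fun i _ => Finset.sum_congr rfl fun k _ => ?_
    rw [pow_mul]; ring
  rw [e]
  calc _ ≤ ∑ i : Fin n, Real.exp (ρ ^ 2) := by
        refine Finset.sum_le_sum fun i _ => ?_
        refine (Real.sum_le_exp_of_nonneg (sq_nonneg _) _).trans ?_
        refine Real.exp_le_exp.2 ?_
        rw [← sq_abs (x i)]
        have : |x i| ≤ ρ := (norm_le_pi_norm x i).trans hρ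
        gcongr
    _ = _ := by simp

theorem SDP_relaxation_a_priori_error_bound (n m : ℕ)
    (g : Fin m → MvPolynomial (Fin n) ℝ) (f : MvPolynomial (Fin n) ℝ)
    (xstar : Fin n → ℝ) (hxV : ∀ j, eval xstar (g j) = 0)
    (hmin : ∀ x : Fin n → ℝ, (∀ j, eval x (g j) = 0) → eval xstar f ≤ eval x f)
    (fstar : ℝ) (hfstar : fstar = eval xstar f)
    (ρ : ℝ) (hρ : ‖xstar‖ ≤ ρ)
    (η : ℝ) (hη : 0 < η)
    (ε : ℝ) (hε : 0 < ε) (hεle : ε ≤ η * ((n : ℝ) * Real.exp (ρ ^ 2))⁻¹) :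
    ∃ r₀ : ℕ, ∀ r : ℕ, r₀ ≤ r →
      f.totalDegree ≤ 2 * r → (∀ j, ((g j) ^ 2).totalDegree ≤ 2 * r) →
      fstar ≤ infQ n m g f ε r ∧ infQ n m g f ε r ≤ fstar + η := by
  have hn : 0 < n := by
    rcases Nat.eq_zero_or_pos n with h | h
    · subst h
      simp at hεle
      linarith
    · exact h
  obtain ⟨r₀, hr₀⟩ := lower_bound n m hn g f fstar (hfstar ▸ hmin) ε hε
  refine ⟨r₀, fun r hr _ _ => ?_⟩
  have hmem : Ly (diracY xstar) (f + C ε * theta n r) ∈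
      {v | ∃ y : (Fin n →₀ ℕ) → ℝ, y 0 = 1 ∧ (momentMatrix n r y).PosSemidef ∧
        (∀ j, Ly y ((g j) ^ 2) ≤ 0) ∧ v = Ly y (f + C ε * theta n r)} := by
    refine ⟨diracY xstar, by simp [diracY], dirac_psd xstar r, fun j => ?_, rfl⟩
    rw [Ly_dirac, map_pow, hxV j]; norm_num
  have hlb : fstar ∈ lowerBounds {v | ∃ y : (Fin n →₀ ℕ) → ℝ, y 0 = 1 ∧
      (momentMatrix n r y).PosSemidef ∧
        (∀ j, Ly y ((g j) ^ 2) ≤ 0) ∧ v = Ly y (f + C ε * theta n r)} := by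
    rintro v ⟨y, h1, h2, h3, rfl⟩
    rw [Ly_eq]
    exact hr₀ r hr y ⟨h1, h2, h3⟩
  refine ⟨le_csInf ⟨_, hmem⟩ hlb, (csInf_le ⟨fstar, hlb⟩ hmem).trans ?_⟩
  rw [Ly_dirac, map_add, map_mul, eval_C, ← hfstar]
  have h1 := theta_eval_le xstar ρ hρ r
  have h2 : (0 : ℝ) < n * Real.exp (ρ ^ 2) := by positivity
  rw [← div_eq_mul_inv, le_div_iff₀ h2] at hεle
  have h3 : ε * eval xstar (theta n r) ≤ ε * (n * Real.exp (ρ ^ 2)) := by gcongr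
  linarith
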